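/- arXiv:2107.03171 — 2 statements merged into one kernel-verified Lean document; each statement's English description precedes it below -/
import Mathlib

section
/- Fix c > 0. Suppose that for every ε > 0 there exists N such that for all n ≥ N, pdeg(OR_n) ≥ (log₂ n)^{c−ε}. Then for every ε > 0 there exists N′ such that for all n ≥ N′ and every truly n-variate Boolean function f : {0,1}^n → {0,1}, we have pdeg(f) ≥ (log₂ n)^{c/(c+1)−ε}. -/
open scoped Classical

noncomputable def evalBool {ι : Type} (a : ι → Bool) (P : MvPolynomial ι ℝ) : ℝ :=
  MvPolynomial.eval (fun i => if a i then (1:ℝ) else 0) P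

def HasProbPoly {ι : Type} (f : (ι → Bool) → Bool) (ε : ℝ) (d : ℕ) : Prop :=
  ∃ (k : ℕ) (w : Fin k → ℝ) (P : Fin k → MvPolynomial ι ℝ),
    (∀ i, 0 ≤ w i) ∧ (∑ i, w i = 1) ∧ (∀ i, (P i).totalDegree ≤ d) ∧
    ∀ a : ι → Bool,
      ∑ i ∈ Finset.univ.filter
          (fun i => evalBool a (P i) ≠ (if f a then (1:ℝ) else 0)), w i ≤ ε

noncomputable def pdeg {ι : Type} (ε : ℝ) (f : (ι → Bool) → Bool) : ℕ :=
  sInf {d | HasProbPoly f ε d}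

def TrulyVariate {ι : Type} (f : (ι → Bool) → Bool) : Prop :=
  ∀ i : ι, ∃ a, f (Function.update a i (!(a i))) ≠ f a

def ORf (n : ℕ) : (Fin n → Bool) → Bool := fun a => decide (∃ i, a i = true)

noncomputable def sensitivity {n : ℕ} (f : (Fin n → Bool) → Bool) : ℕ :=
  Finset.univ.sup (fun a : Fin n → Bool =>
    (Finset.univ.filter (fun i : Fin n => f (Function.update a i (!(a i))) ≠ f a)).card)

namespace PD

/-- real value of a bit -/
noncomputable def bv (x : Bool) : ℝ := if x then 1 else 0

/-- functions on the cube represented by polynomials of degree at most `d` -/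
def IsDeg {ι : Type} (d : ℕ) (F : (ι → Bool) → ℝ) : Prop :=
  ∃ P : MvPolynomial ι ℝ, P.totalDegree ≤ d ∧ ∀ a, evalBool a P = F a

section deg
variable {ι κ : Type}

lemma IsDeg.mono {d e : ℕ} {F : (ι → Bool) → ℝ} (h : IsDeg d F) (hde : d ≤ e) : IsDeg e F := by
  obtain ⟨P, h1, h2⟩ := h
  exact ⟨P, h1.trans hde, h2⟩

lemma isDeg_const (d : ℕ) (r : ℝ) : IsDeg d (fun _ : ι → Bool => r) :=
  ⟨MvPolynomial.C r, by simp, by intro a; simp [evalBool]⟩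

lemma isDeg_var (i : ι) : IsDeg 1 (fun a : ι → Bool => bv (a i)) :=
  ⟨MvPolynomial.X i, by simp, by intro a; simp [evalBool, bv]⟩

lemma IsDeg.add {d : ℕ} {F G : (ι → Bool) → ℝ} (h : IsDeg d F) (h' : IsDeg d G) :
    IsDeg d (fun a => F a + G a) := by
  obtain ⟨P, h1, h2⟩ := h
  obtain ⟨Q, h3, h4⟩ := h'
  refine ⟨P + Q, (MvPolynomial.totalDegree_add _ _).trans (max_le h1 h3), ?_⟩
  intro a
  simp only [← h2, ← h4]; simp [evalBool]

lemma IsDeg.mul {d e : ℕ} {F G : (ι → Bool) → ℝ} (h : IsDeg d F) (h' : IsDeg e G) :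
    IsDeg (d + e) (fun a => F a * G a) := by
  obtain ⟨P, h1, h2⟩ := h
  obtain ⟨Q, h3, h4⟩ := h'
  refine ⟨P * Q, (MvPolynomial.totalDegree_mul _ _).trans (add_le_add h1 h3), ?_⟩
  intro a
  simp only [← h2, ← h4]; simp [evalBool]

lemma IsDeg.smul {d : ℕ} {F : (ι → Bool) → ℝ} (h : IsDeg d F) (r : ℝ) :
    IsDeg d (fun a => r * F a) := by
  have := (isDeg_const (ι := ι) 0 r).mul h
  simpa using this

lemma IsDeg.one_sub {d : ℕ} {F : (ι → Bool) → ℝ} (h : IsDeg d F) :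
    IsDeg d (fun a => 1 - F a) := by
  have := (isDeg_const (ι := ι) d 1).add (h.smul (-1))
  convert this using 2
  ring

lemma IsDeg.sum {α : Type} {d : ℕ} (s : Finset α) {F : α → (ι → Bool) → ℝ}
    (h : ∀ x ∈ s, IsDeg d (F x)) : IsDeg d (fun a => ∑ x ∈ s, F x a) := by
  induction s using Finset.induction_on with
  | empty => simpa using isDeg_const d 0
  | insert x s hx ih =>
    simp only [Finset.sum_insert hx]
    exact (h x (by simp)).add (ih (fun y hy => h y (by simp [hy])))

lemma IsDeg.prod {α : Type} {d : ℕ} (s : Finset α) {F : α → (ι → Bool) → ℝ}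
    (h : ∀ x ∈ s, IsDeg d (F x)) : IsDeg (s.card * d) (fun a => ∏ x ∈ s, F x a) := by
  induction s using Finset.induction_on with
  | empty => simpa using isDeg_const 0 1
  | insert x s hx ih =>
    simp only [Finset.prod_insert hx, Finset.card_insert_of_notMem hx]
    refine ((h x (by simp)).mul (ih (fun y hy => h y (by simp [hy])))).mono ?_
    rw [add_mul]; omega

lemma IsDeg.comp {d : ℕ} {F : (ι → Bool) → ℝ} (h : IsDeg d F) (X : (κ → Bool) → (ι → Bool))
    (hX : ∀ i, IsDeg 1 (fun z => bv (X z i))) : IsDeg d (fun z => F (X z)) := by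
  obtain ⟨P, h1, h2⟩ := h
  choose Q hQ hQ' using hX
  have key : ∀ m ∈ P.support, IsDeg d
      (fun z => P.coeff m * ∏ i ∈ m.support, bv (X z i) ^ (m i)) := by
    intro m hm
    refine IsDeg.smul ?_ _
    have hdeg : ∑ i ∈ m.support, m i ≤ d := (MvPolynomial.le_totalDegree hm).trans h1
    refine ⟨∏ i ∈ m.support, Q i ^ m i, ?_, ?_⟩
    · refine (MvPolynomial.totalDegree_finsetProd _ _).trans (le_trans ?_ hdeg)
      refine Finset.sum_le_sum fun i _ => (MvPolynomial.totalDegree_pow _ _).trans ?_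
      nlinarith [hQ i]
    · intro a
      have : ∀ i, MvPolynomial.eval (fun i => if a i then (1:ℝ) else 0) (Q i) = bv (X a i) :=
        fun i => hQ' i a
      simp [evalBool, this]
  have := IsDeg.sum P.support key
  convert this using 2 with z
  rw [← h2, evalBool, MvPolynomial.eval_eq]
  rfl

lemma isDeg_bv_bool [Fintype ι] (f : (ι → Bool) → Bool) : ∃ d, IsDeg d (fun a => bv (f a)) := by
  refine ⟨Fintype.card ι * 1, ?_⟩
  have key : ∀ b : ι → Bool, IsDeg (Fintype.card ι * 1) (fun a : ι → Bool =>
      bv (f b) * ∏ i, (if b i then bv (a i) else 1 - bv (a i))) := by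
    intro b
    refine IsDeg.smul (IsDeg.prod Finset.univ ?_) _
    intro i _
    split_ifs
    · exact isDeg_var i
    · exact (isDeg_var i).one_sub
  have := IsDeg.sum Finset.univ (fun b _ => key b)
  convert this using 2 with a
  rw [Finset.sum_eq_single a]
  · rw [Finset.prod_eq_one]; · simp
    intro i _
    cases h : a i <;> simp [bv]
  · intro b _ hb
    obtain ⟨i, hi⟩ := Function.ne_iff.1 hb
    rw [Finset.prod_eq_zero (Finset.mem_univ i), mul_zero]
    revert hi
    cases a i <;> cases b i <;> simp [bv]
  · simp
end deg

/-- probability of an event for a finite weighted space -/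
noncomputable def pr {Ω : Type} [Fintype Ω] (w : Ω → ℝ) (p : Ω → Prop) : ℝ :=
  ∑ ω, if p ω then w ω else 0

section prob
variable {Ω Ω' : Type} [Fintype Ω] [Fintype Ω']

lemma pr_nonneg {w : Ω → ℝ} (hw : ∀ ω, 0 ≤ w ω) (p : Ω → Prop) : 0 ≤ pr w p :=
  Finset.sum_nonneg fun ω _ => by split_ifs <;> simp [hw]

lemma pr_mono {w : Ω → ℝ} (hw : ∀ ω, 0 ≤ w ω) {p q : Ω → Prop} (h : ∀ ω, p ω → q ω) :
    pr w p ≤ pr w q :=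
  Finset.sum_le_sum fun ω _ => by
    by_cases h1 : p ω
    · simp [h1, h ω h1]
    · simp only [h1, if_false]; split_ifs <;> simp [hw]

lemma pr_le_one {w : Ω → ℝ} (hw : ∀ ω, 0 ≤ w ω) (h1 : ∑ ω, w ω = 1) (p : Ω → Prop) :
    pr w p ≤ 1 := by
  rw [← h1]
  exact Finset.sum_le_sum fun ω _ => by split_ifs <;> simp [hw]

lemma pr_or_le {w : Ω → ℝ} (hw : ∀ ω, 0 ≤ w ω) (p q : Ω → Prop) :
    pr w (fun ω => p ω ∨ q ω) ≤ pr w p + pr w q := by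
  unfold pr
  rw [← Finset.sum_add_distrib]
  refine Finset.sum_le_sum fun ω _ => ?_
  have := hw ω
  by_cases h1 : p ω <;> by_cases h2 : q ω <;> simp [h1, h2, this]

lemma pr_exists_le {α : Type} [Fintype α] {w : Ω → ℝ} (hw : ∀ ω, 0 ≤ w ω) (p : α → Ω → Prop) :
    pr w (fun ω => ∃ x, p x ω) ≤ ∑ x, pr w (p x) := by
  unfold pr
  rw [Finset.sum_comm]
  refine Finset.sum_le_sum fun ω _ => ?_
  have h0 : ∀ x ∈ (Finset.univ : Finset α), 0 ≤ (if p x ω then w ω else 0) := by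
    intro x _; split_ifs <;> simp [hw]
  split_ifs with h
  · obtain ⟨x, hx⟩ := h
    refine le_trans ?_ (Finset.single_le_sum h0 (Finset.mem_univ x))
    simp [hx]
  · exact Finset.sum_nonneg h0

lemma pr_not {w : Ω → ℝ} (h1 : ∑ ω, w ω = 1) (p : Ω → Prop) :
    pr w (fun ω => ¬ p ω) = 1 - pr w p := by
  rw [← h1, eq_sub_iff_add_eq]
  unfold pr
  rw [← Finset.sum_add_distrib]
  refine Finset.sum_congr rfl fun ω _ => ?_
  by_cases h : p ω <;> simp [h]

lemma pr_prod (w : Ω → ℝ) (w' : Ω' → ℝ) (p : Ω → Prop) (q : Ω' → Prop) :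
    pr (fun x : Ω × Ω' => w x.1 * w' x.2) (fun x => p x.1 ∧ q x.2) = pr w p * pr w' q := by
  unfold pr
  rw [Fintype.sum_prod_type, Finset.sum_mul_sum]
  refine Finset.sum_congr rfl fun x _ => Finset.sum_congr rfl fun y _ => ?_
  by_cases h : p x <;> by_cases h' : q y <;> simp [h, h']

lemma sum_prod_one {w : Ω → ℝ} {w' : Ω' → ℝ} (h : ∑ ω, w ω = 1) (h' : ∑ ω, w' ω = 1) :
    ∑ x : Ω × Ω', w x.1 * w' x.2 = 1 := by
  rw [Fintype.sum_prod_type, ← Finset.sum_mul_sum, h, h', one_mul]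

lemma pr_true {w : Ω → ℝ} (h : ∑ ω, w ω = 1) : pr w (fun _ => True) = 1 := by
  simpa [pr] using h

lemma pr_fst {w : Ω → ℝ} {w' : Ω' → ℝ} (h' : ∑ ω, w' ω = 1) (p : Ω → Prop) :
    pr (fun x : Ω × Ω' => w x.1 * w' x.2) (fun x => p x.1) = pr w p := by
  have := pr_prod w w' p (fun _ => True)
  simpa [pr_true h'] using this

lemma pr_snd {w : Ω → ℝ} {w' : Ω' → ℝ} (h' : ∑ ω, w ω = 1) (p : Ω' → Prop) :
    pr (fun x : Ω × Ω' => w x.1 * w' x.2) (fun x => p x.2) = pr w' p := by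
  have := pr_prod w w' (fun _ => True) p
  simpa [pr_true h'] using this

end prob

/-- probabilistic polynomials with pointwise error -/
def PPoly {ι : Type} (f : (ι → Bool) → Bool) (ε : (ι → Bool) → ℝ) (d : ℕ) : Prop :=
  ∃ (Ω : Type) (_ : Fintype Ω) (w : Ω → ℝ) (F : Ω → (ι → Bool) → ℝ),
    (∀ ω, 0 ≤ w ω) ∧ (∑ ω, w ω = 1) ∧ (∀ ω, IsDeg d (F ω)) ∧
    ∀ a, pr w (fun ω => F ω a ≠ bv (f a)) ≤ ε a

section pp
variable {ι κ : Type}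

lemma PPoly.of_has {f : (ι → Bool) → Bool} {ε : ℝ} {d : ℕ} (h : HasProbPoly f ε d) :
    PPoly f (fun _ => ε) d := by
  obtain ⟨k, w, P, h1, h2, h3, h4⟩ := h
  refine ⟨Fin k, inferInstance, w, fun i a => evalBool a (P i), h1, h2,
    fun i => ⟨P i, h3 i, fun _ => rfl⟩, ?_⟩
  intro a
  have := h4 a
  rw [Finset.sum_filter] at this
  unfold pr bv
  convert this

lemma PPoly.has {f : (ι → Bool) → Bool} {ε : (ι → Bool) → ℝ} {δ : ℝ} {d : ℕ} (h : PPoly f ε d)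
    (hδ : ∀ a, ε a ≤ δ) : HasProbPoly f δ d := by
  obtain ⟨Ω, _, w, F, h1, h2, h3, h4⟩ := h
  choose P hP hP' using h3
  let e := (Fintype.equivFin Ω).symm
  refine ⟨Fintype.card Ω, fun i => w (e i), fun i => P (e i), fun i => h1 _, ?_,
    fun i => hP _, ?_⟩
  · rw [← h2]; exact Equiv.sum_comp e w
  · intro a
    refine le_trans (le_of_eq ?_) ((h4 a).trans (hδ a))
    rw [Finset.sum_filter, pr, ← Equiv.sum_comp e]
    simp only [hP', bv]
    refine Finset.sum_congr rfl fun i _ => ?_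
    congr

lemma PPoly.mono {f : (ι → Bool) → Bool} {ε δ : (ι → Bool) → ℝ} {d e : ℕ} (h : PPoly f ε d)
    (hδ : ∀ a, ε a ≤ δ a) (hde : d ≤ e) : PPoly f δ e := by
  obtain ⟨Ω, _, w, F, h1, h2, h3, h4⟩ := h
  exact ⟨Ω, _, w, F, h1, h2, fun ω => (h3 ω).mono hde, fun a => (h4 a).trans (hδ a)⟩

lemma exists_has [Fintype ι] (f : (ι → Bool) → Bool) : ∃ d, HasProbPoly f (1/3) d := by
  obtain ⟨d, hd⟩ := isDeg_bv_bool f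
  refine ⟨d, PPoly.has (ε := fun _ => 0)
    ⟨Unit, inferInstance, fun _ => 1, fun _ a => bv (f a), by simp, by simp, fun _ => hd, ?_⟩ ?_⟩
  · intro a; simp [pr]
  · intro a; norm_num

lemma has_pdeg [Fintype ι] (f : (ι → Bool) → Bool) : HasProbPoly f (1/3) (pdeg (1/3) f) :=
  Nat.sInf_mem (exists_has f)

lemma PPoly.comp {f : (ι → Bool) → Bool} {ε : ℝ} {d : ℕ} (h : PPoly f (fun _ => ε) d)
    (X : (κ → Bool) → (ι → Bool)) (hX : ∀ i, IsDeg 1 (fun z => bv (X z i))) :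
    PPoly (fun z => f (X z)) (fun _ => ε) d := by
  obtain ⟨Ω, _, w, F, h1, h2, h3, h4⟩ := h
  exact ⟨Ω, _, w, fun ω z => F ω (X z), h1, h2, fun ω => (h3 ω).comp X hX, fun a => h4 _⟩

lemma bv_not (x : Bool) : bv (!x) = 1 - bv x := by cases x <;> simp [bv]

lemma PPoly.neg {f : (ι → Bool) → Bool} {ε : (ι → Bool) → ℝ} {d : ℕ} (h : PPoly f ε d) :
    PPoly (fun z => ! f z) ε d := by
  obtain ⟨Ω, _, w, F, h1, h2, h3, h4⟩ := h
  refine ⟨Ω, _, w, fun ω z => 1 - F ω z, h1, h2, fun ω => (h3 ω).one_sub, fun a => ?_⟩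
  refine (pr_mono h1 ?_).trans (h4 a)
  intro ω hω h
  simp only [h, bv_not] at hω
  exact hω rfl

lemma PPoly.maj {f : (ι → Bool) → Bool} {ε : ℝ} {d : ℕ} (h : PPoly f (fun _ => ε) d)
    (hε : ε ≤ 1) : PPoly f (fun _ => 3 * ε ^ 2 - 2 * ε ^ 3) (3 * d) := by
  obtain ⟨Ω, _, w, F, h1, h2, h3, h4⟩ := h
  refine ⟨Ω × (Ω × Ω), inferInstance, fun x => w x.1 * (w x.2.1 * w x.2.2),
    fun x a => F x.1 a * F x.2.1 a + F x.1 a * F x.2.2 a + F x.2.1 a * F x.2.2 a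
      + (-2) * (F x.1 a * (F x.2.1 a * F x.2.2 a)), ?_, ?_, ?_, ?_⟩
  · intro x; have := h1 x.1; have := h1 x.2.1; have := h1 x.2.2; positivity
  · exact sum_prod_one (w' := fun y : Ω × Ω => w y.1 * w y.2) h2 (sum_prod_one h2 h2)
  · intro x
    have a1 := ((h3 x.1).mul (h3 x.2.1)).mono (show d + d ≤ 3 * d by omega)
    have a2 := ((h3 x.1).mul (h3 x.2.2)).mono (show d + d ≤ 3 * d by omega)
    have a3 := ((h3 x.2.1).mul (h3 x.2.2)).mono (show d + d ≤ 3 * d by omega)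
    have a4 := (((h3 x.1).mul ((h3 x.2.1).mul (h3 x.2.2))).smul (-2)).mono
      (show d + (d + d) ≤ 3 * d by omega)
    exact ((a1.add a2).add a3).add a4
  · intro a
    set e := pr w (fun ω => F ω a ≠ bv (f a)) with he
    have e0 : 0 ≤ e := pr_nonneg h1 _
    have e1 : e ≤ ε := h4 a
    have hmono : 3 * e ^ 2 - 2 * e ^ 3 ≤ 3 * ε ^ 2 - 2 * ε ^ 3 := by
      nlinarith [mul_nonneg (sub_nonneg.2 e1) e0, mul_nonneg (sub_nonneg.2 e1) (e0.trans e1),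
        mul_nonneg (mul_nonneg (sub_nonneg.2 e1) e0) (sub_nonneg.2 hε),
        mul_nonneg (mul_nonneg (sub_nonneg.2 e1) (e0.trans e1)) (sub_nonneg.2 hε),
        mul_nonneg (mul_nonneg (sub_nonneg.2 e1) e0) (sub_nonneg.2 e1)]
    refine le_trans ?_ hmono
    let u : Ω → ℝ := fun ω => if F ω a ≠ bv (f a) then w ω else 0
    have hu : ∑ ω, u ω = e := by
      simp only [u, e, pr]
      refine Finset.sum_congr rfl fun i _ => ?_
      congr
    have expand : 3 * e ^ 2 - 2 * e ^ 3 = ∑ x : Ω × (Ω × Ω),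
        (u x.1 * (u x.2.1 * w x.2.2) + u x.1 * (w x.2.1 * u x.2.2) + w x.1 * (u x.2.1 * u x.2.2)
          - 2 * (u x.1 * (u x.2.1 * u x.2.2))) := by
      simp only [Finset.sum_add_distrib, Finset.sum_sub_distrib, Fintype.sum_prod_type,
        ← Finset.mul_sum, ← Finset.sum_mul, hu, h2]
      ring
    rw [expand]
    refine Finset.sum_le_sum fun x _ => ?_
    have p1 := h1 x.1
    have p2 := h1 x.2.1
    have p3 := h1 x.2.2
    have p23 := mul_nonneg p2 p3
    have p123 := mul_nonneg p1 p23
    simp only [u]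
    by_cases q1 : F x.1 a = bv (f a) <;> by_cases q2 : F x.2.1 a = bv (f a) <;>
      by_cases q3 : F x.2.2 a = bv (f a) <;>
      simp only [q1, q2, q3, ne_eq, not_true_eq_false, not_false_eq_true, if_true, if_false] <;>
      (try (split_ifs <;> nlinarith)) <;>
      · rw [if_neg]
        · simp
        · simp only [not_not]
          cases f a <;> simp [bv] <;> ring
end pp
end PD
namespace PD
section amp
variable {ι : Type}

lemma PPoly.amp_aux {f : (ι → Bool) → Bool} {d : ℕ} (h : PPoly f (fun _ => 1/3) d) (k : ℕ) :
    PPoly f (fun _ => (1/3) * (7/9 : ℝ) ^ (2 ^ k)) (3 ^ (k + 1) * d) := by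
  induction k with
  | zero =>
    refine (h.maj (by norm_num)).mono (fun _ => by norm_num) (by simp)
  | succ k ih =>
    have e1 : (7/9 : ℝ) ^ (2 ^ k) ≤ 1 := pow_le_one₀ (by norm_num) (by norm_num)
    have e0 : (0:ℝ) ≤ (7/9 : ℝ) ^ (2 ^ k) := by positivity
    refine (ih.maj (by linarith)).mono (fun _ => ?_) (by rw [pow_succ 3 (k+1)]; linarith)
    rw [pow_succ 2 k, pow_mul]
    have : 0 ≤ ((7/9 : ℝ) ^ (2 ^ k)) ^ 3 := by positivity
    nlinarith

lemma PPoly.amp {f : (ι → Bool) → Bool} {d : ℕ} (h : PPoly f (fun _ => 1/3) d) (r : ℕ)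
    (hr : 1 ≤ r) : PPoly f (fun _ => (1/2 : ℝ) ^ r) (108 * r ^ 2 * d) := by
  set k := Nat.clog 2 (3 * r) with hk
  have h1 : 3 * r ≤ 2 ^ k := Nat.le_pow_clog (by norm_num) _
  have h2 : 2 ^ (k - 1) < 3 * r := Nat.pow_pred_clog_lt_self (by norm_num) (by omega)
  have hk0 : 0 < k := Nat.clog_pos (by norm_num) (by omega)
  have h3 : 2 ^ k ≤ 6 * r := by
    obtain ⟨j, hj⟩ : ∃ j, k = j + 1 := ⟨k - 1, by omega⟩
    rw [hj] at h2 ⊢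
    simp only [Nat.add_sub_cancel] at h2
    rw [pow_succ]; omega
  refine (h.amp_aux k).mono (fun _ => ?_) ?_
  · have : (7/9 : ℝ) ^ (2 ^ k) ≤ (7/9 : ℝ) ^ (3 * r) :=
      pow_le_pow_of_le_one (by norm_num) (by norm_num) h1
    have h4 : (7/9 : ℝ) ^ (3 * r) ≤ (1/2) ^ r := by
      rw [pow_mul]
      exact pow_le_pow_left₀ (by norm_num) (by norm_num) _
    have : (0:ℝ) ≤ (1/2) ^ r := by positivity
    linarith
  · refine Nat.mul_le_mul_right _ ?_
    calc 3 ^ (k + 1) = 3 * 3 ^ k := by ring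
      _ ≤ 3 * 4 ^ k := by gcongr; norm_num
      _ = 3 * (2 ^ k) ^ 2 := by rw [← pow_mul, mul_comm k 2, pow_mul]; norm_num
      _ ≤ 3 * (6 * r) ^ 2 := by gcongr
      _ = 108 * r ^ 2 := by ring
end amp

section iso
variable {ι : Type} [Fintype ι] [DecidableEq ι]

/-- uniform weight on functions `ι → Fin M` -/
noncomputable def uw (ι : Type) [Fintype ι] (M : ℕ) : (ι → Fin M) → ℝ :=
  fun _ => ((M : ℝ) ^ Fintype.card ι)⁻¹

lemma uw_nonneg (M : ℕ) (ρ : ι → Fin M) : 0 ≤ uw ι M ρ := by unfold uw; positivity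

lemma uw_sum (M : ℕ) (hM : 0 < M) : ∑ ρ, uw ι M ρ = 1 := by
  have : (M : ℝ) ≠ 0 := by positivity
  simp [uw, this]

lemma pr_pi (M : ℕ) (hM : 0 < M) (A : Finset (Fin M)) (T : Finset ι) :
    pr (uw ι M) (fun ρ => ∀ i ∈ T, ρ i ∈ A) = ((A.card : ℝ) / M) ^ T.card := by
  have hM' : (M : ℝ) ≠ 0 := by positivity
  have h1 : (Finset.univ.filter (fun ρ : ι → Fin M => ∀ i ∈ T, ρ i ∈ A))
      = Fintype.piFinset (fun i => if i ∈ T then A else Finset.univ) := by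
    ext ρ
    simp only [Finset.mem_filter, Finset.mem_univ, true_and, Fintype.mem_piFinset]
    refine forall_congr' fun i => ?_
    split_ifs with h <;> simp [h]
  have h0 : pr (uw ι M) (fun ρ => ∀ i ∈ T, ρ i ∈ A)
      = ∑ _ρ ∈ Finset.univ.filter (fun ρ : ι → Fin M => ∀ i ∈ T, ρ i ∈ A),
        ((M : ℝ) ^ Fintype.card ι)⁻¹ := by
    rw [Finset.sum_filter, pr]
    refine Finset.sum_congr rfl fun ρ _ => ?_
    unfold uw
    congr
  rw [h0, Finset.sum_const, h1, Fintype.card_piFinset]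
  have h2 : ∀ i, (if i ∈ T then A else Finset.univ).card = if i ∈ T then A.card else M := by
    intro i; split_ifs <;> simp
  simp only [h2]
  rw [Finset.prod_ite]
  simp only [Finset.prod_const]
  have h3 : (Finset.univ.filter (fun i => i ∈ T)).card = T.card := by simp
  have h4 : (Finset.univ.filter (fun i => i ∉ T)).card + T.card = Fintype.card ι := by
    have := Finset.card_filter_add_card_filter_not (s := (Finset.univ : Finset ι)) (fun i => i ∈ T)
    rw [h3] at this
    rw [add_comm]; simpa using this
  rw [h3, ← h4, pow_add, nsmul_eq_mul, div_pow]
  push_cast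
  field_simp

lemma iso_level (M : ℕ) (hM : 0 < M) (A : Finset (Fin M)) (s : Finset ι)
    (h1 : 1/4 ≤ s.card * ((A.card : ℝ) / M)) (h2 : s.card * ((A.card : ℝ) / M) ≤ 1/2) :
    3/16 ≤ pr (uw ι M) (fun ρ => (s.filter (fun i => ρ i ∈ A)).card = 1) := by
  set p : ℝ := (A.card : ℝ) / M with hp
  have hp0 : 0 ≤ p := by positivity
  have e1 : ∀ i, pr (uw ι M) (fun ρ => ρ i ∈ A) = p := by
    intro i
    have := pr_pi M hM A {i}
    simpa using this
  have e2 : ∀ i j, i ≠ j → pr (uw ι M) (fun ρ => ρ i ∈ A ∧ ρ j ∈ A) = p ^ 2 := by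
    intro i j hij
    have := pr_pi M hM A {i, j}
    rw [Finset.card_pair hij] at this
    simpa using this
  have point : ∀ ρ : ι → Fin M,
      2 * (∑ i ∈ s, if ρ i ∈ A then uw ι M ρ else 0)
        - (∑ i ∈ s, ∑ j ∈ s, if ρ i ∈ A ∧ ρ j ∈ A then uw ι M ρ else 0)
      ≤ if (s.filter (fun i => ρ i ∈ A)).card = 1 then uw ι M ρ else 0 := by
    intro ρ
    have hu := uw_nonneg M ρ
    set X := (s.filter (fun i => ρ i ∈ A)).card with hX
    have a1 : (∑ i ∈ s, if ρ i ∈ A then uw ι M ρ else 0) = X * uw ι M ρ := by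
      rw [← Finset.sum_filter, Finset.sum_const, nsmul_eq_mul]
    have a2 : (∑ i ∈ s, ∑ j ∈ s, if ρ i ∈ A ∧ ρ j ∈ A then uw ι M ρ else 0)
        = X * (X * uw ι M ρ) := by
      rw [← a1, ← nsmul_eq_mul, ← Finset.sum_const, Finset.sum_filter]
      refine Finset.sum_congr rfl fun i _ => ?_
      by_cases h : ρ i ∈ A <;> simp [h]
    rw [a1, a2]
    split_ifs with h
    · rw [h]; norm_num
      linarith
    · have : (2 * (X:ℝ) - X * X) ≤ 0 := by
        rcases Nat.lt_or_ge X 2 with h' | h'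
        · have : X = 0 := by omega
          rw [this]; norm_num
        · have : (2:ℝ) ≤ X := by exact_mod_cast h'
          nlinarith
      nlinarith
  have tot := Finset.sum_le_sum (fun ρ (_ : ρ ∈ (Finset.univ : Finset (ι → Fin M))) => point ρ)
  rw [Finset.sum_sub_distrib, ← Finset.mul_sum, Finset.sum_comm] at tot
  have t1 : (∑ i ∈ s, ∑ ρ : ι → Fin M, if ρ i ∈ A then uw ι M ρ else 0) = s.card * p := by
    rw [← nsmul_eq_mul, ← Finset.sum_const]
    refine Finset.sum_congr rfl fun i _ => ?_
    rw [← e1 i, pr]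
    refine Finset.sum_congr rfl fun ρ _ => ?_
    congr
  have t2 : (∑ ρ : ι → Fin M, ∑ i ∈ s, ∑ j ∈ s, if ρ i ∈ A ∧ ρ j ∈ A then uw ι M ρ else 0)
      ≤ s.card * (p + s.card * p ^ 2) := by
    rw [Finset.sum_comm, ← nsmul_eq_mul, ← Finset.sum_const]
    refine Finset.sum_le_sum fun i hi => ?_
    rw [Finset.sum_comm]
    have : ∀ j ∈ s, (∑ ρ : ι → Fin M, if ρ i ∈ A ∧ ρ j ∈ A then uw ι M ρ else 0)
        ≤ (if j = i then p else 0) + p ^ 2 := by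
      intro j _
      split_ifs with h
      · subst h
        have := e1 j
        rw [pr] at this
        simp only [and_self]
        have e : (∑ ρ : ι → Fin M, if ρ j ∈ A then uw ι M ρ else 0) = p := by
          rw [← this]
          refine Finset.sum_congr rfl fun ρ _ => ?_
          congr
        rw [e]
        nlinarith [sq_nonneg p]
      · rw [zero_add, ← e2 i j (Ne.symm h), pr]
        refine le_of_eq (Finset.sum_congr rfl fun ρ _ => ?_)
        congr
    refine (Finset.sum_le_sum this).trans ?_
    rw [Finset.sum_add_distrib, Finset.sum_const, nsmul_eq_mul]
    simp [hi]
  rw [t1] at tot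
  have fin : (∑ ρ : ι → Fin M, if (s.filter (fun i => ρ i ∈ A)).card = 1 then uw ι M ρ else 0)
     = pr (uw ι M) (fun ρ => (s.filter (fun i => ρ i ∈ A)).card = 1) := by
    unfold pr
    refine Finset.sum_congr rfl fun ρ _ => ?_
    congr
  rw [fin] at tot
  nlinarith

lemma isolation (J : ℕ) (s : Finset ι) (hs : s.Nonempty) (hJ : s.card ≤ 2 ^ J) :
    3/16 ≤ pr (uw ι (2 ^ (J + 1)))
      (fun ρ => ∃ l : Fin (J + 1), (s.filter (fun i => (ρ i).val < 2 ^ l.val)).card = 1) := by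
  set a := Nat.clog 2 s.card with ha
  have k1 : s.card ≤ 2 ^ a := Nat.le_pow_clog (by norm_num) _
  have k0 : 0 < s.card := hs.card_pos
  have k2 : 2 ^ a < 2 * s.card := by
    rcases Nat.eq_or_lt_of_le (show 1 ≤ s.card from k0) with h | h
    · rw [ha, ← h]; simp
    · have h2 : 2 ^ (a - 1) < s.card := Nat.pow_pred_clog_lt_self (by norm_num) h
      have hk0 : 0 < a := Nat.clog_pos (by norm_num) h
      obtain ⟨j, hj⟩ : ∃ j, a = j + 1 := ⟨a - 1, by omega⟩
      rw [hj] at h2 ⊢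
      simp only [Nat.add_sub_cancel] at h2
      rw [pow_succ]; omega
  have k3 : a ≤ J := Nat.clog_le_of_le_pow hJ
  let A : Finset (Fin (2 ^ (J + 1))) := Finset.univ.filter (fun x => x.val < 2 ^ (J - a))
  have hA : A.card = 2 ^ (J - a) := by
    simp only [A]
    rw [Fin.card_filter_val_lt]
    exact min_eq_right (Nat.pow_le_pow_right (by norm_num) (by omega))
  have hp : ((A.card : ℝ) / ((2 ^ (J + 1) : ℕ) : ℝ)) = 1 / (2 * 2 ^ a) := by
    rw [hA]
    push_cast
    have : (2:ℝ) ^ (J + 1) = 2 ^ (J - a) * (2 * 2 ^ a) := by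
      rw [← pow_succ', ← pow_add]; congr 1; omega
    rw [this]
    field_simp
  have k1' : (s.card : ℝ) ≤ 2 ^ a := by exact_mod_cast k1
  have k2' : (2:ℝ) ^ a ≤ 2 * s.card := by exact_mod_cast k2.le
  have pa : (0:ℝ) < 2 ^ a := by positivity
  have main := iso_level (ι := ι) (2 ^ (J + 1)) (by positivity) A s
    (by rw [hp, mul_one_div, div_le_div_iff₀ (by norm_num) (by positivity)]; linarith)
    (by rw [hp, mul_one_div, div_le_div_iff₀ (by positivity) (by norm_num)]; linarith)
  refine main.trans (pr_mono (uw_nonneg _) ?_)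
  intro ρ h
  refine ⟨⟨J - a, by omega⟩, ?_⟩
  refine Eq.trans (congrArg Finset.card ?_) h
  ext i
  simp [A]
end iso
end PD
namespace PD

section orr

lemma pr_fiber {Ω Ω' : Type} [Fintype Ω] [Fintype Ω'] {w : Ω → ℝ} {w' : Ω' → ℝ}
    (hw : ∀ ω, 0 ≤ w ω) (hw' : ∀ ω, 0 ≤ w' ω) (h1 : ∑ ω, w ω = 1) (h1' : ∑ ω, w' ω = 1)
    (B : Ω → Prop) (p : Ω × Ω' → Prop) (c : ℝ)
    (h : ∀ x, B x → pr w' (fun y => p (x, y)) ≤ c) :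
    pr (fun x : Ω × Ω' => w x.1 * w' x.2) p ≤ 1 - pr w B + c * pr w B := by
  have e : pr (fun x : Ω × Ω' => w x.1 * w' x.2) p = ∑ x, w x * pr w' (fun y => p (x, y)) := by
    unfold pr
    rw [Fintype.sum_prod_type]
    refine Finset.sum_congr rfl fun x _ => ?_
    rw [Finset.mul_sum]
    refine Finset.sum_congr rfl fun y _ => ?_
    split_ifs <;> simp
  rw [e, ← pr_not h1]
  unfold pr
  rw [Finset.mul_sum, ← Finset.sum_add_distrib]
  refine Finset.sum_le_sum fun x _ => ?_
  have hx := hw x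
  by_cases hB : B x
  · have := h x hB
    unfold pr at this
    simp only [hB, not_true_eq_false, if_true, if_false, zero_add]
    rw [mul_comm c]
    exact mul_le_mul_of_nonneg_left this hx
  · have := pr_le_one hw' h1' (fun y => p (x, y))
    unfold pr at this
    simp only [hB, not_false_eq_true, if_true, if_false, mul_zero, add_zero]
    exact (mul_le_mul_of_nonneg_left this hx).trans (by simp)

/-- restrict `z` to a set of coordinates -/
def mask {b : ℕ} (m : Fin b → Bool) (z : Fin b → Bool) : Fin b → Bool :=
  fun i => z i && m i

lemma mask_deg {b : ℕ} (m : Fin b → Bool) (i : Fin b) :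
    IsDeg 1 (fun z => bv (mask m z i)) := by
  by_cases h : m i = true
  · simpa [mask, h] using isDeg_var i
  · simpa [mask, h, bv] using isDeg_const (ι := Fin b) 1 0

lemma or_core' {b p q : ℕ} (h : (Fin b → Bool) → Bool) (h0 : h (fun _ => false) = false)
    (h1 : ∀ i, h (fun j => decide (j = i)) = true) {D : ℕ} {δ : ℝ}
    (hp : PPoly h (fun _ => δ) D) (hδ : p * δ ≤ 1/64)
    {R S : Type} [Fintype R] [Fintype S] (uR : R → ℝ) (uS : S → ℝ)
    (uR0 : ∀ x, 0 ≤ uR x) (uS0 : ∀ x, 0 ≤ uS x) (uR1 : ∑ x, uR x = 1) (uS1 : ∑ x, uS x = 1)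
    (mR : R → Fin p → Fin b → Bool) (mS : S → Fin q → Fin p → Bool)
    (isoR : ∀ s : Finset (Fin b), s.Nonempty →
      3/16 ≤ pr uR (fun ρ => ∃ l, (s.filter (fun i => mR ρ l i = true)).card = 1))
    (isoS : ∀ s : Finset (Fin p), s.Nonempty →
      3/16 ≤ pr uS (fun ρ => ∃ l, (s.filter (fun i => mS ρ l i = true)).card = 1)) :
    PPoly (ORf b) (fun a => if a = (fun _ => false) then δ else 251/256) (q * D) := by
  obtain ⟨Ω, _, w, F, w0, w1, hF, hE⟩ := hp
  have wS0 : ∀ x : Ω × S, 0 ≤ w x.1 * uS x.2 := fun x => mul_nonneg (w0 _) (uS0 _)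
  have wS1 : ∑ x : Ω × S, w x.1 * uS x.2 = 1 := sum_prod_one w1 uS1
  have wT0 : ∀ x : R × (Ω × S), 0 ≤ uR x.1 * (w x.2.1 * uS x.2.2) :=
    fun x => mul_nonneg (uR0 _) (wS0 x.2)
  refine ⟨R × (Ω × S), inferInstance, fun x => uR x.1 * (w x.2.1 * uS x.2.2),
    fun x z => 1 - ∏ t : Fin q, (1 - ∑ l ∈ Finset.univ.filter
      (fun l => mS x.2.2 t l = true), F x.2.1 (mask (mR x.1 l) z)), wT0, ?_, ?_, ?_⟩
  · exact sum_prod_one (w := uR) (w' := fun y : Ω × S => w y.1 * uS y.2) uR1 wS1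
  · intro x
    refine IsDeg.one_sub ?_
    have := IsDeg.prod (d := D) (Finset.univ : Finset (Fin q))
      (F := fun t z => (1 - ∑ l ∈ Finset.univ.filter
      (fun l => mS x.2.2 t l = true), F x.2.1 (mask (mR x.1 l) z))) (by
        intro t _
        exact (IsDeg.sum _ (fun l _ => (hF x.2.1).comp _ (mask_deg (mR x.1 l)))).one_sub)
    simpa using this
  · intro z
    by_cases hz : z = fun _ => false
    · beta_reduce; rw [if_pos hz]
      have hm : ∀ m, mask m z = fun _ => false := by
        intro m; subst hz; funext i; simp [mask]
      have hO : ORf b z = false := by subst hz; simp [ORf]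
      have key : pr (fun x : R × (Ω × S) => uR x.1 * (w x.2.1 * uS x.2.2))
          (fun x => F x.2.1 (fun _ => false) ≠ bv (h (fun _ => false))) ≤ δ := by
        have := pr_snd (w := uR) (w' := fun y : Ω × S => w y.1 * uS y.2) uR1
          (fun y => F y.1 (fun _ => false) ≠ bv (h (fun _ => false)))
        rw [this]
        have := pr_fst (w := w) (w' := uS) uS1
          (fun y => F y (fun _ => false) ≠ bv (h (fun _ => false)))
        rw [this]
        exact hE _
      refine le_trans (pr_mono wT0 ?_) key
      intro x hx hx'
      apply hx
      simp only [hm, hx', h0, hO]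
      simp [bv]
    · beta_reduce; rw [if_neg hz]
      have hO : ORf b z = true := by
        obtain ⟨i, hi⟩ := Function.ne_iff.1 hz
        simp only [ORf, decide_eq_true_eq]
        exact ⟨i, by simpa using hi⟩
      let s : Finset (Fin b) := Finset.univ.filter (fun i => z i = true)
      have hs : s.Nonempty := by
        obtain ⟨i, hi⟩ := Function.ne_iff.1 hz
        exact ⟨i, by simpa [s] using hi⟩
      have iso1 := isoR s hs
      have fib := pr_fiber (w := uR) (w' := fun y : Ω × S => w y.1 * uS y.2)
        uR0 wS0 uR1 wS1
        (fun ρ => ∃ l, (s.filter (fun i => mR ρ l i = true)).card = 1)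
        (fun x => 1 - ∏ t : Fin q, (1 - ∑ l ∈ Finset.univ.filter
          (fun l => mS x.2.2 t l = true), F x.2.1 (mask (mR x.1 l) z)) ≠ bv (ORf b z))
        (53/64) ?_
      · refine fib.trans ?_
        linarith
      · rintro ρ ⟨l0, hl0⟩
        let W : Finset (Fin p) := Finset.univ.filter (fun l => h (mask (mR ρ l) z) = true)
        have hl0W : l0 ∈ W := by
          simp only [W, Finset.mem_filter, Finset.mem_univ, true_and]
          obtain ⟨i, hi⟩ := Finset.card_eq_one.1 hl0
          rw [← h1 i]
          congr 1
          funext j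
          have := Finset.ext_iff.1 hi j
          simp only [s, Finset.mem_filter, Finset.mem_univ, true_and, Finset.mem_singleton] at this
          rw [Bool.eq_iff_iff]
          simp [mask, this]
        have iso2 := isoS W ⟨l0, hl0W⟩
        have bad1 : pr (fun y : Ω × S => w y.1 * uS y.2)
            (fun y => ∃ l, F y.1 (mask (mR ρ l) z) ≠ bv (h (mask (mR ρ l) z))) ≤ 1/64 := by
          have := pr_fst (w := w) (w' := uS) uS1
            (fun y => ∃ l, F y (mask (mR ρ l) z) ≠ bv (h (mask (mR ρ l) z)))
          rw [this]
          refine (pr_exists_le w0 _).trans ?_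
          refine (Finset.sum_le_sum (fun l _ => hE (mask (mR ρ l) z))).trans ?_
          simpa using hδ
        have bad2 : pr (fun y : Ω × S => w y.1 * uS y.2)
            (fun y => ¬ ∃ t, (W.filter (fun l => mS y.2 t l = true)).card = 1) ≤ 13/16 := by
          have := pr_snd (w := w) (w' := uS) w1
            (fun y => ¬ ∃ t, (W.filter (fun l => mS y t l = true)).card = 1)
          rw [this, pr_not uS1]
          linarith
        have un := pr_or_le wS0
          (fun y => ∃ l, F y.1 (mask (mR ρ l) z) ≠ bv (h (mask (mR ρ l) z)))
          (fun y => ¬ ∃ t, (W.filter (fun l => mS y.2 t l = true)).card = 1)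
        refine le_trans (pr_mono wS0 ?_) (un.trans (by linarith))
        intro y hy
        by_contra hcon
        rw [not_or, not_not] at hcon
        obtain ⟨c1, t, ht⟩ := hcon
        have c1 : ∀ l, F y.1 (mask (mR ρ l) z) = bv (h (mask (mR ρ l) z)) := by
          intro l; by_contra hl; exact c1 ⟨l, hl⟩
        apply hy
        rw [Finset.prod_eq_zero (Finset.mem_univ t)]
        · simp [hO, bv]
        · rw [sub_eq_zero]
          simp only [c1]
          have : ((W.filter (fun l => mS y.2 t l = true)).card : ℝ) = 1 := by
            exact_mod_cast ht
          rw [← this, Finset.card_eq_sum_ones]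
          push_cast
          simp only [W, Finset.filter_filter]
          rw [Finset.sum_filter, Finset.sum_filter]
          refine Finset.sum_congr rfl fun l _ => ?_
          by_cases q1 : h (mask (mR ρ l) z) = true <;> by_cases q2 : mS y.2 t l = true <;>
            simp [q1, q2, bv]

lemma or_core {b : ℕ} (h : (Fin b → Bool) → Bool) (h0 : h (fun _ => false) = false)
    (h1 : ∀ i, h (fun j => decide (j = i)) = true) (J J2 : ℕ) (hJ : b ≤ 2 ^ J)
    (hJ2 : J + 1 ≤ 2 ^ J2) {D : ℕ} {δ : ℝ} (hp : PPoly h (fun _ => δ) D)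
    (hδ : (J + 1) * δ ≤ 1/64) :
    PPoly (ORf b) (fun a => if a = (fun _ => false) then δ else 251/256) ((J2 + 1) * D) := by
  refine or_core' (p := J + 1) (q := J2 + 1) h h0 h1 hp (by push_cast; exact hδ)
    (uw (Fin b) (2 ^ (J + 1))) (uw (Fin (J + 1)) (2 ^ (J2 + 1)))
    (uw_nonneg _) (uw_nonneg _) (uw_sum _ (Nat.two_pow_pos _)) (uw_sum _ (Nat.two_pow_pos _))
    (fun ρ l i => decide ((ρ i).val < 2 ^ l.val)) (fun ρ l i => decide ((ρ i).val < 2 ^ l.val))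
    ?_ ?_
  · intro s hs
    simp only [decide_eq_true_eq]
    exact isolation J s hs ((Finset.card_le_univ s).trans (by simpa using hJ))
  · intro s hs
    simp only [decide_eq_true_eq]
    exact isolation J2 s hs ((Finset.card_le_univ s).trans (by simpa using hJ2))

lemma or_sq {b : ℕ} {ε : (Fin b → Bool) → ℝ} {d : ℕ} (h : PPoly (ORf b) ε d) :
    PPoly (ORf b) (fun a => if a = (fun _ => false) then 2 * ε a else ε a ^ 2) (2 * d) := by
  obtain ⟨Ω, _, w, F, w0, w1, hF, hE⟩ := h
  have ww0 : ∀ x : Ω × Ω, 0 ≤ w x.1 * w x.2 := fun x => mul_nonneg (w0 _) (w0 _)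
  refine ⟨Ω × Ω, inferInstance, fun x => w x.1 * w x.2,
    fun x a => 1 - (1 - F x.1 a) * (1 - F x.2 a), ww0, sum_prod_one w1 w1, ?_, ?_⟩
  · intro x
    exact ((hF x.1).one_sub.mul (hF x.2).one_sub).one_sub.mono (by omega)
  · intro z
    by_cases hz : z = fun _ => false
    · beta_reduce; rw [if_pos hz]
      have hO : ORf b z = false := by subst hz; simp [ORf]
      have a1 := pr_fst (w := w) (w' := w) w1 (fun y => F y z ≠ bv (ORf b z))
      have a2 := pr_snd (w := w) (w' := w) w1 (fun y => F y z ≠ bv (ORf b z))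
      have un := pr_or_le ww0 (fun x => F x.1 z ≠ bv (ORf b z)) (fun x => F x.2 z ≠ bv (ORf b z))
      rw [a1, a2] at un
      have := hE z
      refine le_trans (pr_mono ww0 ?_) (un.trans (by linarith))
      intro x hx
      by_contra hcon
      rw [not_or, not_not, not_not] at hcon
      apply hx
      rw [hcon.1, hcon.2, hO]
      simp [bv]
    · beta_reduce; rw [if_neg hz]
      have hO : ORf b z = true := by
        obtain ⟨i, hi⟩ := Function.ne_iff.1 hz
        simp only [ORf, decide_eq_true_eq]
        exact ⟨i, by simpa using hi⟩
      have pp := pr_prod w w (fun y => F y z ≠ bv (ORf b z)) (fun y => F y z ≠ bv (ORf b z))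
      have n0 := pr_nonneg w0 (fun y => F y z ≠ bv (ORf b z))
      have := hE z
      refine le_trans (pr_mono ww0 ?_) (pp.le.trans (by nlinarith))
      intro x hx
      by_contra hcon
      rw [not_and_or, not_not, not_not] at hcon
      apply hx
      rcases hcon with hc | hc <;> rw [hc, hO] <;> simp [bv]

lemma or_pow {b : ℕ} {e0 e1 : ℝ} {d : ℕ}
    (h : PPoly (ORf b) (fun a => if a = (fun _ => false) then e0 else e1) d) (k : ℕ) :
    PPoly (ORf b) (fun a => if a = (fun _ => false) then 2 ^ k * e0 else e1 ^ (2 ^ k))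
      (2 ^ k * d) := by
  induction k with
  | zero => simpa using h
  | succ k ih =>
    refine (or_sq ih).mono ?_ (by rw [pow_succ]; linarith)
    intro a
    split_ifs
    · rw [pow_succ]; linarith
    · rw [pow_succ 2 k, pow_mul]

lemma or_main {b : ℕ} (h : (Fin b → Bool) → Bool) (h0 : h (fun _ => false) = false)
    (h1 : ∀ i, h (fun j => decide (j = i)) = true) (J J2 : ℕ) (hJ : b ≤ 2 ^ J)
    (hJ2 : J + 1 ≤ 2 ^ J2) {d : ℕ} (hp : PPoly h (fun _ => 1/3) d) :
    pdeg (1/3) (ORf b) ≤ 6912 * (J2 + 8) ^ 3 * d := by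
  have a1 := hp.amp (J2 + 8) (by omega)
  have hδ : ((J:ℝ) + 1) * (1/2 : ℝ) ^ (J2 + 8) ≤ 1/64 := by
    have : ((J:ℝ) + 1) ≤ 2 ^ J2 := by exact_mod_cast hJ2
    have hpos : (0:ℝ) < 2 ^ J2 := by positivity
    calc ((J:ℝ) + 1) * (1/2 : ℝ) ^ (J2 + 8) ≤ 2 ^ J2 * (1/2 : ℝ) ^ (J2 + 8) := by gcongr
      _ = 1/256 := by rw [pow_add, one_div_pow]; field_simp; norm_num
      _ ≤ 1/64 := by norm_num
  have a2 := or_pow (or_core h h0 h1 J J2 hJ hJ2 a1 hδ) 6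
  refine Nat.sInf_le ((a2.mono (δ := fun _ => 1/3) ?_ ?_).has (fun _ => le_rfl))
  · intro a
    split_ifs
    · have : (1/2 : ℝ) ^ (J2 + 8) ≤ (1/2) ^ 8 :=
        pow_le_pow_of_le_one (by norm_num) (by norm_num) (by omega)
      norm_num at this ⊢
      linarith
    · norm_num
  · calc 2 ^ 6 * ((J2 + 1) * (108 * (J2 + 8) ^ 2 * d))
        = 6912 * ((J2 + 1) * (J2 + 8) ^ 2) * d := by ring
      _ ≤ 6912 * ((J2 + 8) * (J2 + 8) ^ 2) * d := by gcongr; omega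
      _ = _ := by ring
end orr
end PD
namespace PD
section blocks
variable {n : ℕ}

/-- flip the bits of `a` in the block `B` -/
def flipB (a : Fin n → Bool) (B : Finset (Fin n)) : Fin n → Bool :=
  fun j => if j ∈ B then !(a j) else a j

/-- a family of pairwise disjoint sensitive blocks -/
def BS (f : (Fin n → Bool) → Bool) (a : Fin n → Bool) (C : Finset (Finset (Fin n))) : Prop :=
  (∀ B ∈ C, f (flipB a B) ≠ f a) ∧ (∀ B ∈ C, ∀ B' ∈ C, B ≠ B' → Disjoint B B')

lemma or_of_blocks (f : (Fin n → Bool) → Bool) (a : Fin n → Bool) (C : Finset (Finset (Fin n)))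
    (h : BS f a C) (J J2 : ℕ) (hJ : C.card ≤ 2 ^ J) (hJ2 : J + 1 ≤ 2 ^ J2) :
    pdeg (1/3) (ORf C.card) ≤ 6912 * (J2 + 8) ^ 3 * pdeg (1/3) f := by
  let e : Fin C.card ≃ C := C.equivFin.symm
  let X : (Fin C.card → Bool) → (Fin n → Bool) :=
    fun z j => xor (a j) (decide (∃ i, z i = true ∧ j ∈ (e i).1))
  have hX : ∀ j, IsDeg 1 (fun z => bv (X z j)) := by
    intro j
    by_cases hj : ∃ i, j ∈ (e i).1
    · obtain ⟨i, hi⟩ := hj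
      have hu : ∀ i', j ∈ (e i').1 → i' = i := by
        intro i' hi'
        by_contra hne
        have : (e i').1 ≠ (e i).1 := fun hh => hne (e.injective (Subtype.ext hh))
        exact Finset.disjoint_left.1 (h.2 _ (e i').2 _ (e i).2 this) hi' hi
      have : ∀ z, X z j = xor (a j) (z i) := by
        intro z
        simp only [X]
        congr 1
        rw [Bool.eq_iff_iff, decide_eq_true_eq]
        constructor
        · rintro ⟨i', h1, h2⟩
          rwa [← hu i' h2]
        · intro h1; exact ⟨i, h1, hi⟩
      simp only [this]
      cases a j
      · simpa using isDeg_var i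
      · simp only [Bool.true_xor, bv_not]
        exact (isDeg_var i).one_sub
    · have : ∀ z, X z j = a j := by
        intro z
        simp only [X]
        have : ¬ ∃ i, z i = true ∧ j ∈ (e i).1 := fun ⟨i, _, h2⟩ => hj ⟨i, h2⟩
        simp [this]
      simp only [this]
      exact isDeg_const 1 _
  have hX0 : X (fun _ => false) = a := by
    funext j; simp [X]
  have hX1 : ∀ i, X (fun j => decide (j = i)) = flipB a (e i).1 := by
    intro i; funext j
    simp only [X, flipB, decide_eq_true_eq, exists_eq_left]
    split_ifs with hh <;> simp [hh]
  have hp := (PPoly.of_has (has_pdeg f)).comp X hX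
  have hne : ∀ i, f (X (fun j => decide (j = i))) ≠ f a := by
    intro i; rw [hX1]; exact h.1 _ (e i).2
  cases hfa : f a with
  | false =>
    refine or_main (fun z => f (X z)) ?_ ?_ J J2 hJ hJ2 hp
    · simp only [hX0, hfa]
    · intro i; have := hne i; rw [hfa] at this; simpa using this
  | true =>
    refine or_main (fun z => ! f (X z)) ?_ ?_ J J2 hJ hJ2 hp.neg
    · simp only [hX0, hfa]; rfl
    · intro i; have := hne i; rw [hfa] at this; simpa using this

lemma cert (f : (Fin n → Bool) → Bool) (b : ℕ) (hb : ∀ a C, BS f a C → C.card ≤ b)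
    (a : Fin n → Bool) : ∃ U : Finset (Fin n), U.card ≤ b * b ∧
      ∀ y, (∀ j ∈ U, y j = a j) → f y = f a := by
  let Mn : Finset (Fin n) → Prop := fun B => f (flipB a B) ≠ f a ∧
    ∀ C, C ⊂ B → f (flipB a C) = f a
  have hMn : ∀ S : Finset (Fin n), f (flipB a S) ≠ f a → ∃ B, B ⊆ S ∧ Mn B := by
    intro S
    induction S using Finset.strongInduction with
    | H S ih =>
      intro hS
      by_cases hC : ∃ C, C ⊂ S ∧ f (flipB a C) ≠ f a
      · obtain ⟨C, h1, h2⟩ := hC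
        obtain ⟨B, h3, h4⟩ := ih C h1 h2
        exact ⟨B, h3.trans h1.subset, h4⟩
      · refine ⟨S, subset_rfl, hS, fun C hCS => ?_⟩
        by_contra hcon
        exact hC ⟨C, hCS, hcon⟩
  have hcard : ∀ B, Mn B → B.card ≤ b := by
    intro B hB
    have := hb (flipB a B) (B.map ⟨fun j => {j}, Finset.singleton_injective⟩) ?_
    · simpa using this
    · constructor
      · intro B' hB'
        obtain ⟨j, hj, rfl⟩ := Finset.mem_map.1 hB'
        have e : flipB (flipB a B) {j} = flipB a (B.erase j) := by
          funext k
          simp only [flipB, Finset.mem_singleton, Finset.mem_erase]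
          by_cases hk : k = j
          · subst hk; simp [hj]
          · simp [hk]
        simp only [Function.Embedding.coeFn_mk]
        rw [e, hB.2 _ (Finset.erase_ssubset hj)]
        exact hB.1.symm
      · intro B1 h1 B2 h2 hne
        obtain ⟨j, hj, rfl⟩ := Finset.mem_map.1 h1
        obtain ⟨k, hk, rfl⟩ := Finset.mem_map.1 h2
        simp only [Function.Embedding.coeFn_mk, Finset.disjoint_singleton]
        rintro rfl; exact hne rfl
  let Fam : Finset (Finset (Finset (Fin n))) :=
    Finset.univ.filter (fun C => BS f a C ∧ ∀ B ∈ C, Mn B)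
  have hne : Fam.Nonempty := ⟨∅, by
    simp only [Fam, Finset.mem_filter, Finset.mem_univ, true_and]; simp [BS]⟩
  obtain ⟨C, hC, hmax⟩ := Finset.exists_max_image Fam Finset.card hne
  simp only [Fam, Finset.mem_filter, Finset.mem_univ, true_and] at hC hmax
  refine ⟨C.biUnion id, ?_, ?_⟩
  · refine (Finset.card_biUnion_le_card_mul C id b (fun B hB => hcard B (hC.2 B hB))).trans ?_
    exact Nat.mul_le_mul_right _ (hb a C hC.1)
  · intro y hy
    by_contra hcon
    let S : Finset (Fin n) := Finset.univ.filter (fun j => y j ≠ a j)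
    have hS : flipB a S = y := by
      funext j
      simp only [flipB, S, Finset.mem_filter, Finset.mem_univ, true_and]
      cases y j <;> cases a j <;> simp
    obtain ⟨B, hBS, hB⟩ := hMn S (by rw [hS]; exact hcon)
    have hdis : ∀ B' ∈ C, Disjoint B B' := by
      intro B' hB'
      rw [Finset.disjoint_left]
      intro j hj hj'
      have h1 := hBS hj
      simp only [S, Finset.mem_filter, Finset.mem_univ, true_and] at h1
      exact h1 (hy j (Finset.mem_biUnion.2 ⟨B', hB', hj'⟩))
    have hBn : B.Nonempty := by
      rw [Finset.nonempty_iff_ne_empty]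
      rintro rfl
      exact hB.1 (by congr 1)
    have hBC : B ∉ C := by
      intro hBC
      have := hdis B hBC
      rw [disjoint_self] at this
      exact hBn.ne_empty this
    have := hmax (insert B C) ?_
    · rw [Finset.card_insert_of_notMem hBC] at this; omega
    · refine ⟨⟨?_, ?_⟩, ?_⟩
      · intro B' hB'
        rcases Finset.mem_insert.1 hB' with rfl | h'
        · exact hB.1
        · exact hC.1.1 _ h'
      · intro B1 h1 B2 h2 hne
        rcases Finset.mem_insert.1 h1 with h1' | h1' <;> rcases Finset.mem_insert.1 h2 with h2' | h2'
        · exact absurd (h1'.trans h2'.symm) hne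
        · rw [h1']; exact hdis _ h2'
        · rw [h2']; exact (hdis _ h1').symm
        · exact hC.1.2 _ h1' _ h2' hne
      · intro B' hB'
        rcases Finset.mem_insert.1 hB' with rfl | h'
        · exact hB
        · exact hC.2 _ h'

lemma local_struct (f : (Fin n → Bool) → Bool) (hf : TrulyVariate f) (b : ℕ)
    (hb : ∀ a C, BS f a C → C.card ≤ b) (i : Fin n) :
    ∃ (a : Fin n → Bool) (W : Finset (Fin n)), i ∉ W ∧ W.card ≤ 2 * (b * b) ∧
      ∀ y, (∀ j ∈ W, y j = a j) → (f y = f a ↔ y i = a i) := by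
  obtain ⟨a, ha0⟩ := hf i
  have ha : f (Function.update a i (!(a i))) ≠ f a := by convert ha0
  set a' := Function.update a i (!(a i)) with ha'
  obtain ⟨U, hU1, hU2⟩ := cert f b hb a
  obtain ⟨U', hU1', hU2'⟩ := cert f b hb a'
  refine ⟨a, (U ∪ U').erase i, by simp, ?_, ?_⟩
  · refine (Finset.card_erase_le).trans ((Finset.card_union_le _ _).trans (by omega))
  · intro y hy
    by_cases hyi : y i = a i
    · simp only [hyi, iff_true]
      refine hU2 y fun j hj => ?_
      by_cases hji : j = i
      · rw [hji, hyi]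
      · exact hy j (by simp [hji, hj])
    · simp only [hyi, iff_false]
      rw [hU2' y fun j hj => ?_]
      · exact ha
      · by_cases hji : j = i
        · subst hji
          simp only [ha', Function.update_self]
          revert hyi
          cases y j <;> cases a j <;> simp
        · rw [ha', Function.update_of_ne hji]
          exact hy j (by simp [hji, hj])

lemma pr_coll (m : ℕ) (hm : 0 < m) (x y : Fin n) (hxy : x ≠ y) :
    pr (uw (Fin n) m) (fun ρ => ρ x = ρ y) ≤ 1 / m := by
  have h1 : pr (uw (Fin n) m) (fun ρ => ρ x = ρ y) ≤
      pr (uw (Fin n) m) (fun ρ => ∃ c : Fin m, ∀ i ∈ ({x, y} : Finset (Fin n)),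
        ρ i ∈ ({c} : Finset (Fin m))) := by
    refine pr_mono (uw_nonneg m) ?_
    intro ρ h
    exact ⟨ρ y, by simp [h]⟩
  refine h1.trans ((pr_exists_le (uw_nonneg m) _).trans (le_of_eq ?_))
  have hm' : (m:ℝ) ≠ 0 := by positivity
  simp only [pr_pi m hm, Finset.card_pair hxy]
  simp
  field_simp

lemma hash (W : Fin n → Finset (Fin n)) (K : ℕ) (hW : ∀ i, (W i).card ≤ K) :
    ∃ (ρ : Fin n → Fin (2 * K ^ 2 + 1)) (c : Fin (2 * K ^ 2 + 1)) (G : Finset (Fin n)),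
      n ≤ 2 * (2 * K ^ 2 + 1) * G.card ∧ ∀ i ∈ G, ρ i = c ∧
        ∀ x ∈ W i, ∀ y ∈ W i, ρ x = ρ y → x = y := by
  set m := 2 * K ^ 2 + 1 with hm
  have hm0 : 0 < m := by omega
  let good : (Fin n → Fin m) → Fin n → Prop := fun ρ i =>
    ∀ x ∈ W i, ∀ y ∈ W i, ρ x = ρ y → x = y
  have u0 := uw_nonneg (ι := Fin n) m
  have u1 := uw_sum (ι := Fin n) m hm0
  have hgood : ∀ i, 1/2 ≤ pr (uw (Fin n) m) (fun ρ => good ρ i) := by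
    intro i
    have hbad : pr (uw (Fin n) m) (fun ρ => ¬ good ρ i) ≤ 1/2 := by
      have h1 : pr (uw (Fin n) m) (fun ρ => ¬ good ρ i) ≤
          pr (uw (Fin n) m) (fun ρ => ∃ p : (W i) × (W i), p.1.1 ≠ p.2.1 ∧ ρ p.1.1 = ρ p.2.1) := by
        refine pr_mono u0 ?_
        intro ρ h
        simp only [good] at h
        push Not at h
        obtain ⟨x, hx, y, hy, h1, h2⟩ := h
        exact ⟨(⟨x, hx⟩, ⟨y, hy⟩), h2, h1⟩
      refine h1.trans ((pr_exists_le u0 _).trans ?_)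
      have h2 : ∀ p ∈ (Finset.univ : Finset ((W i) × (W i))),
          pr (uw (Fin n) m) (fun ρ => p.1.1 ≠ p.2.1 ∧ ρ p.1.1 = ρ p.2.1) ≤ 1 / m := by
        intro p _
        by_cases hp : p.1.1 = p.2.1
        · simp [hp, pr]
        · exact (pr_mono u0 (fun ρ h => h.2)).trans (pr_coll m hm0 _ _ hp)
      refine (Finset.sum_le_sum h2).trans ?_
      have hc : ((W i).card : ℝ) ≤ K := by exact_mod_cast hW i
      have hc0 : (0:ℝ) ≤ (W i).card := by positivity
      rw [Finset.sum_const, nsmul_eq_mul, Finset.card_univ, Fintype.card_prod, mul_one_div,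
        div_le_div_iff₀ (by positivity) (by norm_num)]
      simp only [Fintype.card_coe, hm]
      push_cast
      nlinarith
    rw [pr_not u1] at hbad
    linarith
  have hex : ∃ ρ, (n:ℝ) / 2 ≤ ((Finset.univ.filter (fun i => good ρ i)).card : ℝ) := by
    by_contra hcon
    push Not at hcon
    have h1 : (n:ℝ) / 2 ≤ ∑ i : Fin n, pr (uw (Fin n) m) (fun ρ => good ρ i) := by
      have := Finset.sum_le_sum (fun i (_ : i ∈ (Finset.univ : Finset (Fin n))) => hgood i)
      simp at this
      linarith
    have h2 : ∑ i : Fin n, pr (uw (Fin n) m) (fun ρ => good ρ i)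
        = ∑ ρ, uw (Fin n) m ρ * ((Finset.univ.filter (fun i => good ρ i)).card : ℝ) := by
      unfold pr
      rw [Finset.sum_comm]
      refine Finset.sum_congr rfl fun ρ _ => ?_
      beta_reduce
      rw [mul_comm, ← nsmul_eq_mul, ← Finset.sum_const, Finset.sum_filter]
      exact Finset.sum_congr rfl fun _ _ => by congr
    have h3 : ∑ ρ, uw (Fin n) m ρ * ((Finset.univ.filter (fun i => good ρ i)).card : ℝ)
        < ∑ ρ, uw (Fin n) m ρ * ((n:ℝ) / 2) := by
      refine Finset.sum_lt_sum_of_nonempty ?_ ?_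
      · exact ⟨fun _ => ⟨0, hm0⟩, Finset.mem_univ _⟩
      · intro ρ _
        refine mul_lt_mul_of_pos_left (hcon ρ) ?_
        unfold uw; positivity
    rw [← Finset.sum_mul, u1, one_mul] at h3
    linarith
  obtain ⟨ρ, hρ⟩ := hex
  have hρ' : n ≤ 2 * (Finset.univ.filter (fun i => good ρ i)).card := by
    have : (n:ℝ) ≤ 2 * ((Finset.univ.filter (fun i => good ρ i)).card : ℝ) := by linarith
    exact_mod_cast this
  have hfib := Finset.card_eq_sum_card_fiberwise (f := ρ)
    (s := Finset.univ.filter (fun i => good ρ i)) (t := Finset.univ) (by intro x _; simp)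
  obtain ⟨c, -, hcm⟩ := Finset.exists_max_image (Finset.univ : Finset (Fin m))
    (fun c => ((Finset.univ.filter (fun i => good ρ i)).filter (fun i => ρ i = c)).card)
    ⟨⟨0, hm0⟩, Finset.mem_univ _⟩
  refine ⟨ρ, c, (Finset.univ.filter (fun i => good ρ i)).filter (fun i => ρ i = c), ?_, ?_⟩
  · have := Finset.sum_le_sum hcm
    rw [← hfib, Finset.sum_const, Finset.card_univ, Fintype.card_fin, smul_eq_mul] at this
    rw [mul_assoc]
    omega
  · intro i hi
    simp only [Finset.mem_filter, Finset.mem_univ, true_and] at hi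
    exact ⟨hi.2, hi.1⟩
end blocks
end PD
namespace PD
section counting
variable {G : Type} [Fintype G]

lemma basis_set (V : Submodule ℝ (G → ℝ)) (S : Finset G) :
    ∃ B : Finset G, B ⊆ S ∧ B.card ≤ Module.finrank ℝ V ∧
      ∀ v ∈ V, (∀ i ∈ B, v i = 0) → ∀ i ∈ S, v i = 0 := by
  let Fam : Finset (Finset G) :=
    Finset.univ.filter (fun B => B ⊆ S ∧ ∀ v ∈ V, (∀ i ∈ B, v i = 0) → ∀ i ∈ S, v i = 0)
  have hne : Fam.Nonempty := ⟨S, by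
    simp only [Fam, Finset.mem_filter, Finset.mem_univ, true_and]
    exact ⟨subset_rfl, fun v _ h => h⟩⟩
  obtain ⟨B, hB, hmin⟩ := Finset.exists_min_image Fam Finset.card hne
  simp only [Fam, Finset.mem_filter, Finset.mem_univ, true_and] at hB hmin
  refine ⟨B, hB.1, ?_, hB.2⟩
  have hv : ∀ i : B, ∃ v : V, (∀ j ∈ B, j ≠ i.1 → v.1 j = 0) ∧ v.1 i.1 ≠ 0 := by
    intro i
    by_contra hcon
    push Not at hcon
    have := hmin (B.erase i.1) ?_
    · have h2 := Finset.card_erase_lt_of_mem i.2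
      omega
    · refine ⟨(Finset.erase_subset _ _).trans hB.1, ?_⟩
      intro v hv h
      have h1 : ∀ j ∈ B, j ≠ i.1 → v j = 0 := fun j hj hne => h j (Finset.mem_erase.2 ⟨hne, hj⟩)
      refine hB.2 v hv fun j hj => ?_
      by_cases hji : j = i.1
      · rw [hji]; exact hcon ⟨v, hv⟩ h1
      · exact h1 j hj hji
  choose v h1 h2 using hv
  have hli : LinearIndependent ℝ v := by
    rw [Fintype.linearIndependent_iff]
    intro g hg j
    have h3 : (∑ i, g i • v i).1 j.1 = 0 := by rw [hg]; rfl
    rw [Submodule.coe_sum, Finset.sum_apply, Finset.sum_eq_single j] at h3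
    · simpa [h2 j] using h3
    · intro i _ hij
      have : (v i).1 j.1 = 0 := h1 i j.1 j.2 (fun h => hij (Subtype.ext h.symm))
      simp [this]
    · simp
  simpa using hli.fintype_card_le_finrank

lemma count (V : Submodule ℝ (G → ℝ)) (k : ℕ) (hk : 9 * k ≤ Fintype.card G)
    (h : ∀ g : G → Bool, ∃ v ∈ V, (Finset.univ.filter (fun i => v i ≠ bv (g i))).card ≤ k) :
    Fintype.card G ≤ 3 * Module.finrank ℝ V := by
  choose v hvV hv using h
  set D := Module.finrank ℝ V with hD
  set N := Fintype.card G with hN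
  choose B hB0 hB1 hB2 using fun E : Finset G => basis_set V (Eᶜ)
  let T : Finset (Σ _ : Finset G, Finset G) :=
    (Finset.univ.filter (fun E : Finset G => E.card ≤ k)).sigma (fun E => (E ∪ B E).powerset)
  let E : (G → Bool) → Finset G := fun g => Finset.univ.filter (fun i => v g i ≠ bv (g i))
  have hE : ∀ g i, i ∉ E g → v g i = bv (g i) := by
    intro g i hi
    by_contra hcon
    exact hi (by simp only [E, Finset.mem_filter, Finset.mem_univ, true_and]; exact hcon)
  let φ : (G → Bool) → (Σ _ : Finset G, Finset G) := fun g =>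
    ⟨E g, (E g ∪ B (E g)).filter (fun i => g i = true)⟩
  have hinj : Function.Injective φ := by
    intro g g' hgg
    simp only [φ, Sigma.mk.injEq] at hgg
    obtain ⟨e1, e2⟩ := hgg
    rw [← e1] at e2
    have e3 := eq_of_heq e2
    have e4 : ∀ i ∈ E g ∪ B (E g), g i = g' i := by
      intro i hi
      have := Finset.ext_iff.1 e3 i
      simp only [Finset.mem_filter, hi, true_and] at this
      rw [Bool.eq_iff_iff]; exact this
    funext i
    by_cases hi : i ∈ E g
    · exact e4 i (Finset.mem_union_left _ hi)
    · have := hB2 (E g) (v g - v g') (V.sub_mem (hvV g) (hvV g')) ?_ i (by simpa using hi)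
      · simp only [Pi.sub_apply, hE g i hi, hE g' i (e1 ▸ hi)] at this
        revert this
        cases g i <;> cases g' i <;> simp [bv]
      · intro j hj
        have hj' := e4 j (Finset.mem_union_right _ hj)
        by_cases hjE : j ∈ E g
        · exact absurd hjE (Finset.mem_compl.1 (hB0 _ hj))
        · simp only [Pi.sub_apply, hE g j hjE, hE g' j (e1 ▸ hjE), hj', sub_self]
  have hcard : 2 ^ N ≤ T.card := by
    have := Finset.card_le_card_of_injOn (s := Finset.univ) (t := T) φ ?_ (hinj.injOn)
    · simpa [hN] using this
    · intro g _
      simp only [T, φ, Finset.coe_sigma, Set.mem_sigma_iff, Finset.mem_coe, Finset.mem_filter,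
        Finset.mem_univ, true_and, Finset.mem_powerset]
      exact ⟨hv g, Finset.filter_subset _ _⟩
  have h1 : (2:ℝ) ^ N ≤ 2 ^ D * (8 ^ k * (5/4) ^ N) := by
    have h2 : (T.card : ℝ) ≤ ∑ E : Finset G, 2 ^ D * (8 ^ k * ((1/4) ^ E.card * 1 ^ (N - E.card))) := by
      simp only [T, Finset.card_sigma, Finset.card_powerset]
      push_cast
      rw [Finset.sum_filter]
      refine Finset.sum_le_sum fun E _ => ?_
      split_ifs with hEk
      · have h3 : (E ∪ B E).card ≤ E.card + D := (Finset.card_union_le _ _).trans (by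
          have := hB1 E; omega)
        have h4 : (2:ℝ) ^ (E ∪ B E).card ≤ 2 ^ (E.card + D) :=
          pow_le_pow_right₀ (by norm_num) h3
        refine h4.trans ?_
        rw [pow_add, mul_comm, one_pow, mul_one]
        refine mul_le_mul_of_nonneg_left ?_ (by positivity)
        have h5 : (8:ℝ) ^ E.card ≤ 8 ^ k := pow_le_pow_right₀ (by norm_num) hEk
        calc (2:ℝ) ^ E.card = 8 ^ E.card * (1/4) ^ E.card := by rw [← mul_pow]; norm_num
          _ ≤ _ := mul_le_mul_of_nonneg_right h5 (by positivity)
      · positivity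
    rw [← Finset.mul_sum, ← Finset.mul_sum, hN, Fintype.sum_pow_mul_eq_add_pow] at h2
    have h6 : (2:ℝ) ^ N ≤ T.card := by exact_mod_cast hcard
    refine h6.trans (h2.trans (le_of_eq ?_))
    rw [← hN]
    norm_num
  have h2 : (2:ℝ) ^ (3 * N) ≤ 2 ^ (3 * D + 2 * N) := by
    have h3 := pow_le_pow_left₀ (by positivity) h1 3
    calc (2:ℝ) ^ (3 * N) = (2 ^ N) ^ 3 := by rw [← pow_mul, mul_comm]
      _ ≤ _ := h3
      _ = 2 ^ (3 * D) * (2 ^ (9 * k) * (125/64) ^ N) := by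
        rw [mul_pow, mul_pow, ← pow_mul, ← pow_mul, ← pow_mul, mul_comm D, mul_comm N, pow_mul (5/4 : ℝ),
          show (8:ℝ) = 2 ^ 3 by norm_num, ← pow_mul, show 3 * (k * 3) = 9 * k by ring]
        norm_num
      _ ≤ 2 ^ (3 * D) * (2 ^ N * 2 ^ N) := by
        gcongr
        · norm_num
        · norm_num
      _ = _ := by rw [← pow_add, ← pow_add]; congr 1; ring
  have h3 := (pow_le_pow_iff_right₀ (by norm_num : (1:ℝ) < 2)).1 h2
  omega
end counting
end PD
namespace PD
section spans

lemma prod_getElem {α : Type} (φ : α → ℝ) : ∀ (D : ℕ) (l : List α), l.length ≤ D →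
    ∏ t : Fin D, (l[t.1]?).elim 1 φ = (l.map φ).prod := by
  intro D
  induction D with
  | zero =>
    intro l hl
    have : l = [] := List.eq_nil_of_length_eq_zero (by omega)
    subst this; simp
  | succ D ih =>
    intro l hl
    rw [Fin.prod_univ_succ]
    cases l with
    | nil => simp
    | cons x l =>
      have := ih l (by simpa using hl)
      simp only [List.map_cons, List.prod_cons, ← this]
      simp

/-- monomials of degree at most `D` evaluated at the points `z i` -/
noncomputable def monoV {G : Type} {m : ℕ} (z : G → (Fin m → Bool)) (D : ℕ)
    (s : Fin D → Option (Fin m)) : G → ℝ :=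
  fun i => ∏ t, (s t).elim 1 (fun k => bv (z i k))

lemma mem_span {G : Type} {m : ℕ} (z : G → (Fin m → Bool)) (D : ℕ)
    (H : (Fin m → Bool) → ℝ) (hH : IsDeg D H) :
    (fun i => H (z i)) ∈ Submodule.span ℝ (Set.range (monoV z D)) := by
  obtain ⟨P, h1, h2⟩ := hH
  have e : (fun i => H (z i)) = ∑ u ∈ P.support, P.coeff u •
      (fun i => ∏ k ∈ u.support, bv (z i k) ^ u k) := by
    funext i
    rw [Finset.sum_apply, ← h2, evalBool, MvPolynomial.eval_eq]
    rfl
  rw [e]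
  refine Submodule.sum_mem _ fun u hu => Submodule.smul_mem _ _ (Submodule.subset_span ?_)
  have hdeg : u.toMultiset.card ≤ D := by
    rw [Finsupp.card_toMultiset]
    exact (MvPolynomial.le_totalDegree hu).trans h1
  refine ⟨fun t => u.toMultiset.toList[t.1]?, ?_⟩
  funext i
  simp only [monoV]
  rw [prod_getElem _ D _ (by simpa using hdeg), ← Multiset.prod_coe, ← Multiset.map_coe,
    Multiset.coe_toList, Finset.prod_multiset_map_count, Finsupp.toFinset_toMultiset]
  refine Finset.prod_congr rfl fun k _ => ?_
  rw [Finsupp.count_toMultiset]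

lemma finrank_span {G : Type} [Fintype G] {m : ℕ} (z : G → (Fin m → Bool)) (D : ℕ) :
    Module.finrank ℝ (Submodule.span ℝ (Set.range (monoV z D))) ≤ (m + 1) ^ D := by
  have := finrank_range_le_card (R := ℝ) (monoV z D)
  simpa [Set.finrank] using this

lemma avg {Ω G : Type} [Fintype Ω] [Fintype G] (w : Ω → ℝ) (hw : ∀ ω, 0 ≤ w ω)
    (h1 : ∑ ω, w ω = 1) (p : G → Ω → Prop) (hp : ∀ i, pr w (p i) ≤ 1/16) :
    ∃ ω, (Finset.univ.filter (fun i => p i ω)).card ≤ Fintype.card G / 16 := by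
  by_contra hcon
  push Not at hcon
  have h2 : ∑ i, pr w (p i) = ∑ ω, w ω * ((Finset.univ.filter (fun i => p i ω)).card : ℝ) := by
    unfold pr
    rw [Finset.sum_comm]
    refine Finset.sum_congr rfl fun ω _ => ?_
    rw [mul_comm, ← nsmul_eq_mul, ← Finset.sum_const, Finset.sum_filter]
  have h3 : ∑ ω, w ω * ((Finset.univ.filter (fun i => p i ω)).card : ℝ) ≥
      ∑ ω, w ω * ((Fintype.card G + 1 : ℝ) / 16) := by
    refine Finset.sum_le_sum fun ω _ => mul_le_mul_of_nonneg_left ?_ (hw ω)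
    have := hcon ω
    have h4 : Fintype.card G + 1 ≤ 16 * (Finset.univ.filter (fun i => p i ω)).card := by omega
    have h5 : (Fintype.card G + 1 : ℝ) ≤ 16 * ((Finset.univ.filter (fun i => p i ω)).card : ℝ) := by
      exact_mod_cast h4
    linarith
  rw [← Finset.sum_mul, h1, ← h2] at h3
  have h4 := Finset.sum_le_sum (fun i (_ : i ∈ (Finset.univ : Finset G)) => hp i)
  simp at h4
  linarith

lemma main_count {n : ℕ} (f : (Fin n → Bool) → Bool) (hf : TrulyVariate f) (b : ℕ)
    (hb : ∀ a C, BS f a C → C.card ≤ b) (D : ℕ) (hp : PPoly f (fun _ => 1/16) D) :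
    n ≤ 2 * (2 * (2 * (b * b) + 1) ^ 2 + 1) *
      (3 * ((2 * (2 * (b * b) + 1) ^ 2 + 1) + 1) ^ D) := by
  choose a W hiW hWc hst using local_struct f hf b hb
  obtain ⟨m, hm, ρ, c, G, hG, hgood⟩ : ∃ m : ℕ, 2 * (2 * (b * b) + 1) ^ 2 + 1 = m ∧
      ∃ (ρ : Fin n → Fin m) (c : Fin m) (G : Finset (Fin n)),
      n ≤ 2 * m * G.card ∧ ∀ i ∈ G, ρ i = c ∧
        ∀ x ∈ insert i (W i), ∀ y ∈ insert i (W i), ρ x = ρ y → x = y :=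
    ⟨_, rfl, hash (fun i => insert i (W i)) (2 * (b * b) + 1)
      (fun i => (Finset.card_insert_le _ _).trans (by have := hWc i; omega))⟩
  rw [hm]
  refine hG.trans (Nat.mul_le_mul_left _ ?_)
  let z : G → Fin m → Bool := fun i k => decide (∃ j ∈ W i.1, ρ j = k ∧ a i.1 j = true)
  have key := count (G := G) (Submodule.span ℝ (Set.range (monoV z D))) (Fintype.card G / 16)
    (by omega) ?_
  · rw [Fintype.card_coe] at key
    exact key.trans (Nat.mul_le_mul_left _ (finrank_span z D))
  intro g
  let S : Fin n → Prop := fun i => ∃ h : i ∈ G, (a i i = true ↔ g ⟨i, h⟩ = f (a i))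
  let X : (Fin m → Bool) → Fin n → Bool := fun y j => if ρ j = c then decide (S j) else y (ρ j)
  have hX : ∀ j, IsDeg 1 (fun y => bv (X y j)) := by
    intro j
    by_cases hj : ρ j = c
    · simp only [X, hj, if_true]
      exact isDeg_const 1 _
    · simp only [X, hj, if_false]
      exact isDeg_var _
  have hval : ∀ i : G, f (X (z i)) = g i := by
    intro i
    obtain ⟨h1, h2⟩ := hgood i.1 i.2
    have h3 : ∀ j ∈ W i.1, X (z i) j = a i.1 j := by
      intro j hj
      have hjc : ρ j ≠ c := by
        intro hjc
        have := h2 j (Finset.mem_insert_of_mem hj) i.1 (Finset.mem_insert_self _ _)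
          (hjc.trans h1.symm)
        exact hiW i.1 (this ▸ hj)
      simp only [X, hjc, if_false, z]
      rw [Bool.eq_iff_iff, decide_eq_true_eq]
      constructor
      · rintro ⟨j', hj', e, e2⟩
        rwa [← h2 j' (Finset.mem_insert_of_mem hj') j (Finset.mem_insert_of_mem hj) e]
      · intro e; exact ⟨j, hj, rfl, e⟩
    have h4 := hst i.1 (X (z i)) h3
    have h5 : X (z i) i.1 = decide (S i.1) := by simp only [X, h1, if_true]
    have h6 : S i.1 ↔ (a i.1 i.1 = true ↔ g i = f (a i.1)) := by
      constructor
      · rintro ⟨_, h⟩; exact h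
      · intro h; exact ⟨i.2, h⟩
    rw [h5] at h4
    by_cases hS : S i.1
    · have h7 := h6.1 hS
      simp only [hS, decide_true] at h4
      revert h4 h7
      cases f (X (z i)) <;> cases f (a i.1) <;> cases a i.1 i.1 <;> cases g i <;> simp
    · have h7 := mt h6.2 hS
      simp only [hS, decide_false] at h4
      revert h4 h7
      cases f (X (z i)) <;> cases f (a i.1) <;> cases a i.1 i.1 <;> cases g i <;> simp
  obtain ⟨Ω, _, w, F, hw, hw1, hF, herr⟩ := hp.comp X hX
  obtain ⟨ω, hω⟩ := avg (G := G) w hw hw1 (fun i ω => F ω (z i) ≠ bv (g i)) (by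
    intro i
    rw [← hval i]
    exact herr (z i))
  exact ⟨fun i => F ω (z i), mem_span z D (F ω) (hF ω), by convert hω⟩
end spans
end PD
namespace PD
section final

lemma struct {n : ℕ} (hn : 1 ≤ n) (f : (Fin n → Bool) → Bool) (hf : TrulyVariate f) :
    ∃ b : ℕ, 1 ≤ b ∧ (∀ J J2, b ≤ 2 ^ J → J + 1 ≤ 2 ^ J2 →
      pdeg (1/3) (ORf b) ≤ 6912 * (J2 + 8) ^ 3 * pdeg (1/3) f) ∧
      n ≤ (2 * b) ^ (7 * (1728 * pdeg (1/3) f + 1)) := by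
  let Fam : Finset ((Fin n → Bool) × Finset (Finset (Fin n))) :=
    Finset.univ.filter (fun p => BS f p.1 p.2)
  obtain ⟨a0, ha0⟩ := hf ⟨0, hn⟩
  have hmem : (a0, ({{⟨0, hn⟩}} : Finset (Finset (Fin n)))) ∈ Fam := by
    simp only [Fam, Finset.mem_filter, Finset.mem_univ, true_and]
    simp only [BS, Finset.mem_singleton]
    constructor
    · rintro B rfl
      have : flipB a0 {⟨0, hn⟩} = Function.update a0 ⟨0, hn⟩ (!(a0 ⟨0, hn⟩)) := by
        funext j
        simp only [flipB, Finset.mem_singleton, Function.update_apply]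
        split_ifs with h
        · rw [h]
        · rfl
      rw [this]
      convert ha0
    · rintro B rfl B' rfl h; exact absurd rfl h
  obtain ⟨⟨a, C⟩, hC, hmax⟩ := Finset.exists_max_image Fam (fun p => p.2.card) ⟨_, hmem⟩
  have hC' : BS f a C := by
    simpa only [Fam, Finset.mem_filter, Finset.mem_univ, true_and] using hC
  have hb : ∀ a' C', BS f a' C' → C'.card ≤ C.card := by
    intro a' C' h
    exact hmax (a', C') (by simpa only [Fam, Finset.mem_filter, Finset.mem_univ, true_and] using h)
  have h1 : 1 ≤ C.card := by simpa using hmax _ hmem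
  refine ⟨C.card, h1, fun J J2 => or_of_blocks f a C hC' J J2, ?_⟩
  have hp := (PPoly.of_has (has_pdeg f)).amp 4 (by norm_num)
  have h2 := main_count f hf C.card hb (1728 * pdeg (1/3) f) (by
    convert hp using 2 <;> norm_num)
  generalize C.card = b at h1 h2
  generalize pdeg (1/3) f = d at h2
  have hbb : 1 ≤ b * b := Nat.mul_pos h1 h1
  have h3 : 2 * (2 * (b * b) + 1) ^ 2 + 1 + 1 ≤ 20 * b ^ 4 := by nlinarith
  have h4 : 120 * b ^ 4 ≤ (2 * b) ^ 7 := by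
    have : b ^ 4 ≤ b ^ 7 := Nat.pow_le_pow_right h1 (by norm_num)
    rw [mul_pow]; omega
  calc n ≤ _ := h2
    _ ≤ 2 * (20 * b ^ 4) * (3 * (20 * b ^ 4) ^ (1728 * d)) := by
      gcongr
      omega
    _ = (120 * b ^ 4) * (20 * b ^ 4) ^ (1728 * d) := by ring
    _ ≤ (2 * b) ^ 7 * ((2 * b) ^ 7) ^ (1728 * d) := by
      gcongr
      omega
    _ = _ := by rw [← pow_succ', ← pow_mul]

lemma clog_le (b : ℕ) (hb : 1 ≤ b) : (Nat.clog 2 b : ℝ) ≤ Real.logb 2 b + 1 := by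
  have := Real.natCeil_logb_natCast 2 b
  rw [← this]
  exact (Nat.ceil_lt_add_one (Real.logb_nonneg (by norm_num) (by exact_mod_cast hb))).le

lemma j2_le (b : ℕ) (hb : 1 ≤ b) (δ : ℝ) (hδ : 0 < δ) :
    ((Nat.clog 2 (Nat.clog 2 b + 1) : ℝ) + 8) ^ 3 ≤
      (10 + 6 / δ) ^ 3 * (1 + Real.logb 2 b) ^ δ := by
  set B := 1 + Real.logb 2 b with hB
  have hβ : 0 ≤ Real.logb 2 b := Real.logb_nonneg (by norm_num) (by exact_mod_cast hb)
  have hB1 : 1 ≤ B := by linarith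
  have h1 := clog_le b hb
  have h2 := clog_le (Nat.clog 2 b + 1) (by omega)
  have h3 : Real.logb 2 ((Nat.clog 2 b + 1 : ℕ) : ℝ) ≤ 1 + Real.logb 2 B := by
    have : 1 + Real.logb 2 B = Real.logb 2 (2 * B) := by
      rw [Real.logb_mul (by norm_num) (by linarith), Real.logb_self_eq_one (by norm_num)]
    rw [this]
    apply Real.logb_le_logb_of_le (by norm_num) (by positivity)
    push_cast; linarith
  have h4 : Real.logb 2 B ≤ 6 / δ * B ^ (δ / 3) := by
    have h5 := Real.log_le_rpow_div (x := B) (by linarith) (show 0 < δ / 3 by positivity)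
    have h6 : (1/2 : ℝ) ≤ Real.log 2 := by have := Real.log_two_gt_d9; linarith
    have h7 : 0 ≤ Real.log B := Real.log_nonneg hB1
    rw [Real.logb, div_le_iff₀ (by linarith)]
    have h8 : Real.log B ≤ 3 / δ * B ^ (δ / 3) := by
      refine h5.trans (le_of_eq ?_); field_simp
    have h9 : 0 ≤ 6 / δ * B ^ (δ / 3) := by positivity
    calc Real.log B ≤ 3 / δ * B ^ (δ / 3) := h8
      _ = (6 / δ * B ^ (δ / 3)) * (1/2) := by ring
      _ ≤ _ := mul_le_mul_of_nonneg_left h6 h9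
  have h5 : (1:ℝ) ≤ B ^ (δ / 3) := Real.one_le_rpow hB1 (by positivity)
  have h6 : (Nat.clog 2 (Nat.clog 2 b + 1) : ℝ) + 8 ≤ (10 + 6 / δ) * B ^ (δ / 3) := by
    nlinarith
  have h7 := pow_le_pow_left₀ (by positivity) h6 3
  refine h7.trans (le_of_eq ?_)
  rw [mul_pow, ← Real.rpow_natCast (B ^ (δ/3)), ← Real.rpow_mul (by linarith)]
  congr 2
  push_cast; ring

lemma asym1 (c c' : ℝ) (hc' : 0 < c') (hcc : c' < c)
    (hOR : ∀ ε : ℝ, 0 < ε → ∃ N : ℕ, ∀ n : ℕ, N ≤ n →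
      (Real.logb 2 n) ^ (c - ε) ≤ (pdeg (1/3) (ORf n) : ℝ)) :
    ∃ K : ℝ, 0 < K ∧ ∀ b d : ℕ, 1 ≤ b → (∀ J J2, b ≤ 2 ^ J → J + 1 ≤ 2 ^ J2 →
      pdeg (1/3) (ORf b) ≤ 6912 * (J2 + 8) ^ 3 * d) →
      (1 + Real.logb 2 b) ^ c' ≤ K * (d + 1) := by
  set δ := (c - c') / 2 with hδ
  have hδ0 : 0 < δ := by rw [hδ]; linarith
  obtain ⟨N, hN⟩ := hOR δ hδ0
  set N2 := max N 2 with hN2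
  set K1 : ℝ := 2 ^ (c' + δ) * (6912 * (10 + 6 / δ) ^ 3) with hK1
  set K2 : ℝ := (1 + Real.logb 2 N2) ^ c' with hK2
  have hK1p : 0 < K1 := by positivity
  have hl2 : 0 ≤ Real.logb 2 (N2 : ℝ) := Real.logb_nonneg (by norm_num) (by
    have : 1 ≤ N2 := by omega
    exact_mod_cast this)
  have hK2p : 0 ≤ K2 := by positivity
  refine ⟨K1 + K2, by positivity, ?_⟩
  intro b d hb h
  have hβ : 0 ≤ Real.logb 2 (b:ℝ) := Real.logb_nonneg (by norm_num) (by exact_mod_cast hb)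
  have hd : (0:ℝ) ≤ d := by positivity
  by_cases hbN : N2 ≤ b
  · have h1 := hN b (by omega)
    have h2 := h (Nat.clog 2 b) (Nat.clog 2 (Nat.clog 2 b + 1))
      (Nat.le_pow_clog (by norm_num) _) (Nat.le_pow_clog (by norm_num) _)
    have h2' : (pdeg (1/3) (ORf b) : ℝ) ≤
        6912 * ((Nat.clog 2 (Nat.clog 2 b + 1) : ℝ) + 8) ^ 3 * d := by exact_mod_cast h2
    have h3 := j2_le b hb δ hδ0
    have hβ1 : 1 ≤ Real.logb 2 (b:ℝ) := by
      rw [Real.le_logb_iff_rpow_le (by norm_num) (by positivity)]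
      have : 2 ≤ b := by omega
      simpa using (by exact_mod_cast this : (2:ℝ) ≤ b)
    set β := Real.logb 2 (b:ℝ) with hβd
    have h4 : (1 + β) ^ (c' + δ) ≤ 2 ^ (c' + δ) * β ^ (c' + δ) := by
      rw [← Real.mul_rpow (by norm_num) hβ]
      exact Real.rpow_le_rpow (by positivity) (by linarith) (by positivity)
    have e1 : c - δ = c' + δ := by rw [hδ]; ring
    rw [e1] at h1
    have hBp : 0 < (1 + β) ^ δ := by positivity
    have h5 : (1 + β) ^ c' * (1 + β) ^ δ ≤ (K1 * d) * (1 + β) ^ δ := by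
      rw [← Real.rpow_add (by positivity)]
      refine h4.trans ?_
      calc (2:ℝ) ^ (c' + δ) * β ^ (c' + δ)
          ≤ 2 ^ (c' + δ) * (6912 * ((10 + 6 / δ) ^ 3 * (1 + β) ^ δ) * d) := by
            refine mul_le_mul_of_nonneg_left (h1.trans (h2'.trans ?_)) (by positivity)
            gcongr
        _ = _ := by rw [hK1]; ring
    have h6 := le_of_mul_le_mul_right h5 hBp
    nlinarith
  · have h1 : (1 + Real.logb 2 (b:ℝ)) ^ c' ≤ K2 := by
      refine Real.rpow_le_rpow (by positivity) ?_ hc'.le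
      have : Real.logb 2 (b:ℝ) ≤ Real.logb 2 (N2:ℝ) := by
        apply Real.logb_le_logb_of_le (by norm_num) (by positivity)
        have : b ≤ N2 := by omega
        exact_mod_cast this
      linarith
    nlinarith

lemma final_asym (e c' K : ℝ) (hc' : 0 < c') (hK : 0 < K) (he : e < c' / (c' + 1)) :
    ∃ N : ℕ, ∀ n : ℕ, N ≤ n → 1 ≤ n → ∀ b d : ℕ, 1 ≤ b →
      (1 + Real.logb 2 b) ^ c' ≤ K * (d + 1) → n ≤ (2 * b) ^ (7 * (1728 * d + 1)) →
      (Real.logb 2 n) ^ e ≤ d := by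
  set γ := c' / (c' + 1) with hγ
  have hγ0 : 0 < γ := by positivity
  set e0 := max e 0 with he0
  have hlt : 0 < γ - e0 := by
    have : e0 < γ := max_lt he hγ0
    linarith
  set K3 : ℝ := (12096 * K ^ (1 / c')) ^ γ with hK3
  have hK3p : 0 < K3 := by positivity
  have ht : Filter.Tendsto (fun n : ℕ => (Real.logb 2 n) ^ (γ - e0)) Filter.atTop Filter.atTop :=
    (tendsto_rpow_atTop hlt).comp ((Real.tendsto_logb_atTop (by norm_num)).comp
      tendsto_natCast_atTop_atTop)
  obtain ⟨N, hN⟩ := Filter.eventually_atTop.1 (ht.eventually_ge_atTop (2 * K3))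
  refine ⟨max N 2, ?_⟩
  intro n hn hn1 b d hb h1 h2
  have h3 := hN n (by omega)
  have hx1 : 1 ≤ Real.logb 2 (n:ℝ) := by
    rw [Real.le_logb_iff_rpow_le (by norm_num) (by positivity)]
    have : 2 ≤ n := by omega
    simpa using (by exact_mod_cast this : (2:ℝ) ≤ n)
  have hβ : 0 ≤ Real.logb 2 (b:ℝ) := Real.logb_nonneg (by norm_num) (by exact_mod_cast hb)
  have hb0 : (0:ℝ) < b := by exact_mod_cast hb
  have h4 : Real.logb 2 (n:ℝ) ≤ 12096 * (d + 1) * (1 + Real.logb 2 (b:ℝ)) := by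
    have h5 : (n:ℝ) ≤ (2 * b) ^ (7 * (1728 * d + 1)) := by exact_mod_cast h2
    have h6 := Real.logb_le_logb_of_le (b := 2) (by norm_num) (by positivity) h5
    rw [Real.logb_pow, Real.logb_mul (by norm_num) (by positivity),
      Real.logb_self_eq_one (by norm_num)] at h6
    refine h6.trans ?_
    refine mul_le_mul_of_nonneg_right ?_ (by linarith)
    push_cast; linarith
  set x := Real.logb 2 (n:ℝ) with hx
  set B := 1 + Real.logb 2 (b:ℝ) with hB
  have hBp : 0 < B := by linarith
  have h5 : B ≤ K ^ (1 / c') * ((d:ℝ) + 1) ^ (1 / c') := by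
    rw [← Real.mul_rpow hK.le (by positivity)]
    have := Real.rpow_le_rpow (by positivity) h1 (show 0 ≤ 1 / c' by positivity)
    rwa [← Real.rpow_mul hBp.le, mul_one_div_cancel hc'.ne', Real.rpow_one] at this
  have h6 : x ≤ (12096 * K ^ (1 / c')) * ((d:ℝ) + 1) ^ (1 / γ) := by
    have e1 : 1 / γ = 1 + 1 / c' := by rw [hγ]; field_simp
    rw [e1, Real.rpow_add (by positivity), Real.rpow_one]
    refine h4.trans ?_
    calc 12096 * ((d:ℝ) + 1) * B ≤ 12096 * ((d:ℝ) + 1) * (K ^ (1 / c') * ((d:ℝ) + 1) ^ (1 / c')) := by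
          gcongr
      _ = _ := by ring
  have h7 : x ^ γ ≤ K3 * (d + 1) := by
    have := Real.rpow_le_rpow (by positivity) h6 hγ0.le
    rwa [Real.mul_rpow (by positivity) (by positivity), ← Real.rpow_mul (by positivity),
      one_div_mul_cancel hγ0.ne', Real.rpow_one] at this
  have h8 : x ^ e ≤ x ^ e0 := Real.rpow_le_rpow_of_exponent_le hx1 (le_max_left _ _)
  have h9 : 1 ≤ x ^ e0 := Real.one_le_rpow hx1 (le_max_right _ _)
  have h10 : 2 * K3 * x ^ e0 ≤ x ^ γ := by
    have : x ^ γ = x ^ (γ - e0) * x ^ e0 := by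
      rw [← Real.rpow_add (by linarith)]; congr 1; ring
    rw [this]
    exact mul_le_mul_of_nonneg_right h3 (by linarith)
  have h11 : K3 * (2 * x ^ e0) ≤ K3 * (d + 1) := by linarith
  have h12 := le_of_mul_le_mul_left h11 hK3p
  linarith
end final
end PD
theorem lower_bound_truly_nvariate (c : ℝ) (hc : 0 < c)
    (hOR : ∀ ε : ℝ, 0 < ε → ∃ N : ℕ, ∀ n : ℕ, N ≤ n →
      (Real.logb 2 n) ^ (c - ε) ≤ (pdeg (1/3) (ORf n) : ℝ)) :
    ∀ ε : ℝ, 0 < ε → ∃ N' : ℕ, ∀ n : ℕ, N' ≤ n →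
      ∀ f : (Fin n → Bool) → Bool, TrulyVariate f →
        (Real.logb 2 n) ^ (c / (c + 1) - ε) ≤ (pdeg (1/3) f : ℝ) := by
  intro ε hε
  obtain ⟨c', hc', hcc, he⟩ : ∃ c' : ℝ, 0 < c' ∧ c' < c ∧ c / (c + 1) - ε < c' / (c' + 1) := by
    set e0 := max (c / (c + 1) - ε) 0 with he0
    have h0 : 0 ≤ e0 := le_max_right _ _
    have h1 : e0 < c / (c + 1) := max_lt (by linarith) (by positivity)
    have h2 : e0 * (c + 1) < c := by rwa [lt_div_iff₀ (by linarith)] at h1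
    have h3 : e0 < 1 := by nlinarith
    have h4 : e0 / (1 - e0) < c := by
      rw [div_lt_iff₀ (by linarith)]; nlinarith
    have h5 : 0 ≤ e0 / (1 - e0) := div_nonneg h0 (by linarith)
    refine ⟨(c + e0 / (1 - e0)) / 2, by linarith, by linarith, ?_⟩
    refine lt_of_le_of_lt (le_max_left _ 0) ?_
    rw [← he0]
    have h6 : e0 / (1 - e0) < (c + e0 / (1 - e0)) / 2 := by linarith
    generalize (c + e0 / (1 - e0)) / 2 = y at h6
    rw [div_lt_iff₀ (by linarith)] at h6
    have hy : 0 < y := by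
      by_contra hcon
      nlinarith
    rw [lt_div_iff₀ (by linarith)]
    nlinarith
  obtain ⟨K, hK, hK'⟩ := PD.asym1 c c' hc' hcc hOR
  obtain ⟨N, hN⟩ := PD.final_asym (c / (c + 1) - ε) c' K hc' hK he
  refine ⟨max N 2, ?_⟩
  intro n hn f hf
  obtain ⟨b, hb, h1, h2⟩ := PD.struct (by omega) f hf
  exact hN n (by omega) (by omega) b (pdeg (1/3) f) hb (hK' b _ hb h1) h2
end

section
/- Fix c > 0. Suppose that for every ε > 0 there exists N such that for all n ≥ N, pdeg(OR_n) ≤ (log₂ n)^{c+ε}. Then for every ε > 0 there exists N′ such that for all n ≥ N′ there exists a truly n-variate Boolean function f : {0,1}^n → {0,1} with pdeg(f) ≤ (log₂ n)^{c/(c+1)+ε}. -/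
open scoped Classical

open MvPolynomial in
lemma totalDegree_aeval_le_aux {σ τ : Type} (g : σ → MvPolynomial τ ℝ) (k : ℕ)
    (hg : ∀ i, (g i).totalDegree ≤ k) (P : MvPolynomial σ ℝ) :
    (aeval g P).totalDegree ≤ k * P.totalDegree := by
  rw [aeval_def, eval₂_eq]
  refine totalDegree_finsetSum_le ?_
  intro d hd
  refine (totalDegree_mul _ _).trans ?_
  rw [algebraMap_eq, totalDegree_C, zero_add]
  refine (totalDegree_finsetProd _ _).trans ?_
  calc ∑ i ∈ d.support, (g i ^ d i).totalDegree ≤ ∑ i ∈ d.support, k * d i := by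
        refine Finset.sum_le_sum fun i _ => ?_
        refine (totalDegree_pow _ _).trans ?_
        rw [mul_comm]
        exact Nat.mul_le_mul_right _ (hg i)
    _ = k * ∑ i ∈ d.support, d i := by rw [Finset.mul_sum]
    _ ≤ k * P.totalDegree := Nat.mul_le_mul_left _ (le_totalDegree hd)

lemma OR_has (M : ℕ) : HasProbPoly (ORf M) (1/3) (pdeg (1/3) (ORf M)) := by
  have : {d | HasProbPoly (ORf M) (1/3) d}.Nonempty := by
    refine ⟨_, 1, fun _ => 1, fun _ => 1 - ∏ i, (1 - MvPolynomial.X i), by simp, by simp,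
      fun _ => le_rfl, ?_⟩
    intro a
    rw [Finset.sum_eq_zero]
    · norm_num
    · intro i hi
      exfalso
      rw [Finset.mem_filter] at hi
      apply hi.2
      simp only [evalBool, ORf, map_sub, map_one, map_prod, MvPolynomial.eval_X]
      by_cases h : ∃ i, a i = true
      · obtain ⟨j, hj⟩ := h
        rw [Finset.prod_eq_zero (Finset.mem_univ j) (by simp [hj])]
        simp [show ∃ i, a i = true from ⟨j, hj⟩]
      · have h' : ∀ i, a i = false := by simpa using h
        simp [h']
  exact Nat.sInf_mem this

def addrF {ι : Type} {m t s : ℕ} (E : Fin m ⊕ Fin t × Fin s ≃ ι)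
    (A : Fin m → Fin t → Option (Fin s)) : (ι → Bool) → Bool := fun a =>
  decide (∃ d, a (E (Sum.inl d)) = true ∧
    ∀ p : Fin t × Fin s, (a (E (Sum.inr p)) = true ↔ A d p.1 = some p.2))

lemma addrF_truly {ι : Type} {m t s : ℕ} (E : Fin m ⊕ Fin t × Fin s ≃ ι)
    (A : Fin m → Fin t → Option (Fin s)) (d0 : Fin m)
    (h0 : ∀ j, A d0 j = none) : TrulyVariate (addrF E A) := by
  intro i
  obtain ⟨v, rfl⟩ := E.surjective i
  rcases v with d | p
  · -- data variable
    refine ⟨fun k => match E.symm k with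
      | Sum.inl _ => false
      | Sum.inr p => decide (A d p.1 = some p.2), ?_⟩
    have h1 : ∀ b : ι → Bool, (∃ d', b (E (Sum.inl d')) = true ∧
        ∀ p : Fin t × Fin s, (b (E (Sum.inr p)) = true ↔ A d' p.1 = some p.2)) →
        addrF E A b = true := fun b hb => by simpa [addrF] using hb
    rw [h1]
    · simp [addrF]
    · refine ⟨d, ?_, ?_⟩
      · simp
      · intro p
        rw [Function.update_of_ne (by simp)]
        simp
  · -- address variable
    refine ⟨fun k => match E.symm k with
      | Sum.inl d => decide (d = d0)
      | Sum.inr p => false, ?_⟩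
    have e1 : addrF E A (fun k => match E.symm k with
      | Sum.inl d => decide (d = d0)
      | Sum.inr p => false) = true := by
      simp [addrF, h0]
    rw [e1]
    simp only [addrF, ne_eq, decide_eq_true_eq]
    rintro ⟨d, hd, hp⟩
    rw [Function.update_of_ne (by simp)] at hd
    have hd' : d = d0 := by simpa using hd
    subst hd'
    have := hp p
    simp [h0] at this

/-- collision gadget -/
noncomputable def collP {ι : Type} {t s : ℕ} (y : Fin t × Fin s → ι)
    (q : Fin t × Fin s × Fin s) : MvPolynomial ι ℝ :=
  if q.2.1 = q.2.2 then 0 else MvPolynomial.X (y (q.1, q.2.1)) * MvPolynomial.X (y (q.1, q.2.2))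

noncomputable def selP {ι : Type} {t s : ℕ} (y : Fin t × Fin s → ι) (j : Fin t) :
    Option (Fin s) → MvPolynomial ι ℝ
  | none => 1 - ∑ i, MvPolynomial.X (y (j, i))
  | some i => MvPolynomial.X (y (j, i))

open MvPolynomial in
lemma selP_deg {ι : Type} {t s : ℕ} (y : Fin t × Fin s → ι) (j : Fin t) (o : Option (Fin s)) :
    (selP y j o).totalDegree ≤ 1 := by
  cases o with
  | none =>
    refine (totalDegree_sub _ _).trans ?_
    refine max_le (by simp) ?_
    exact totalDegree_finsetSum_le fun i _ => by simp [totalDegree_X]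
  | some i => simp [selP, totalDegree_X]

open MvPolynomial in
lemma collP_deg {ι : Type} {t s : ℕ} (y : Fin t × Fin s → ι) (q : Fin t × Fin s × Fin s) :
    (collP y q).totalDegree ≤ 2 := by
  unfold collP
  split_ifs
  · simp
  · refine (totalDegree_mul _ _).trans ?_
    simp [totalDegree_X]

/-- value of selector on a valid block -/
lemma selP_eval {ι : Type} {t s : ℕ} (y : Fin t × Fin s → ι) (a : ι → Bool)
    (hv : ∀ j i i', a (y (j, i)) = true → a (y (j, i')) = true → i = i')
    (j : Fin t) (o : Option (Fin s)) :
    evalBool a (selP y j o) = if ∀ i, (a (y (j, i)) = true ↔ o = some i) then 1 else 0 := by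
  cases o with
  | none =>
    simp only [selP, evalBool, map_sub, map_one, map_sum, MvPolynomial.eval_X]
    by_cases h : ∃ i, a (y (j, i)) = true
    · obtain ⟨i, hi⟩ := h
      rw [Finset.sum_eq_single i]
      · rw [if_pos hi, if_neg]
        · simp
        · intro h; simpa using (h i).1 hi
      · intro i' _ hne
        rw [if_neg]
        intro h; exact hne (hv _ _ _ h hi)
      · simp
    · push Not at h
      simp [h]
  | some i =>
    simp only [selP, evalBool, MvPolynomial.eval_X]
    refine if_congr ?_ rfl rfl
    constructor
    · intro h i'
      constructor
      · intro h'; rw [hv _ _ _ h h']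
      · intro h'; cases h'; exact h
    · intro h; exact (h i).2 rfl

lemma addrF_has {ι : Type} {m t s : ℕ} (E : Fin m ⊕ Fin t × Fin s ≃ ι)
    (A : Fin m → Fin t → Option (Fin s)) (hA : Function.Injective A) :
    HasProbPoly (addrF E A) (1/3) (2 * pdeg (1/3) (ORf (t * (s * s))) + (1 + t)) := by
  obtain ⟨k, w, P, hw, hs, hd, hP⟩ := OR_has (t * (s * s))
  have hcard : Fintype.card (Fin (t * (s * s))) = Fintype.card (Fin t × Fin s × Fin s) := by simp
  let φ : Fin (t * (s * s)) ≃ Fin t × Fin s × Fin s := Fintype.equivOfCardEq hcard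
  let y : Fin t × Fin s → ι := fun p => E (Sum.inr p)
  let S : MvPolynomial ι ℝ := ∑ d, MvPolynomial.X (E (Sum.inl d)) * ∏ j, selP y j (A d j)
  refine ⟨k, w, fun i => (1 - MvPolynomial.aeval (fun q => collP y (φ q)) (P i)) * S,
    hw, hs, ?_, ?_⟩
  · intro i
    refine (MvPolynomial.totalDegree_mul _ _).trans (add_le_add ?_ ?_)
    · refine (MvPolynomial.totalDegree_sub _ _).trans (max_le (by simp) ?_)
      exact (totalDegree_aeval_le_aux _ 2 (fun q => collP_deg _ _) _).trans
        (Nat.mul_le_mul_left _ (hd i))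
    · refine MvPolynomial.totalDegree_finsetSum_le fun d _ => ?_
      refine (MvPolynomial.totalDegree_mul _ _).trans (add_le_add (by simp [MvPolynomial.totalDegree_X]) ?_)
      refine (MvPolynomial.totalDegree_finsetProd _ _).trans ?_
      exact (Finset.sum_le_sum fun j _ => selP_deg y j (A d j)).trans (by simp)
  · intro a
    let b : Fin (t * (s * s)) → Bool := fun q =>
      decide ((φ q).2.1 ≠ (φ q).2.2) && (a (y ((φ q).1, (φ q).2.1)) && a (y ((φ q).1, (φ q).2.2)))
    refine le_trans (Finset.sum_le_sum_of_subset_of_nonneg ?_ fun i _ _ => hw i) (hP b)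
    intro i hi
    rw [Finset.mem_filter] at hi ⊢
    refine ⟨hi.1, fun hgood => hi.2 ?_⟩
    have hcomp : evalBool a (MvPolynomial.aeval (fun q => collP y (φ q)) (P i))
        = evalBool b (P i) := by
      have : ∀ q, evalBool a (collP y (φ q)) = if b q then (1:ℝ) else 0 := by
        intro q
        simp only [collP, evalBool, b]
        by_cases h : (φ q).2.1 = (φ q).2.2
        · simp [h]
        · rw [if_neg h]
          simp only [map_mul, MvPolynomial.eval_X]
          by_cases h1 : a (y ((φ q).1, (φ q).2.1)) = true <;>
            by_cases h2 : a (y ((φ q).1, (φ q).2.2)) = true <;> simp [h, h1, h2]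
      have e : evalBool b (P i) = MvPolynomial.eval (fun q => evalBool a (collP y (φ q))) (P i) := by
        simp only [this]; rfl
      rw [e]
      simp only [evalBool]
      rw [MvPolynomial.aeval_def, MvPolynomial.algebraMap_eq, MvPolynomial.eval₂_eq',
        map_sum, MvPolynomial.eval_eq']
      simp only [map_mul, map_prod, map_pow, MvPolynomial.eval_C]
    have hmul : evalBool a ((1 - MvPolynomial.aeval (fun q => collP y (φ q)) (P i)) * S)
        = (1 - evalBool b (P i)) * evalBool a S := by
      rw [← hcomp]; simp [evalBool]
    rw [hmul, hgood]
    by_cases hv : ∀ j i i', a (y (j, i)) = true → a (y (j, i')) = true → i = i'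
    · have hb : ORf (t * (s * s)) b = false := by
        simp only [ORf, decide_eq_false_iff_not]
        rintro ⟨q, hq⟩
        simp only [b, Bool.and_eq_true, decide_eq_true_eq] at hq
        exact hq.1 (hv _ _ _ hq.2.1 hq.2.2)
      have hS : evalBool a S = ∑ d, (if a (E (Sum.inl d)) = true ∧
          ∀ p : Fin t × Fin s, (a (E (Sum.inr p)) = true ↔ A d p.1 = some p.2) then (1:ℝ) else 0) := by
        have : evalBool a S = ∑ d, (if a (E (Sum.inl d)) then (1:ℝ) else 0) *
            ∏ j, evalBool a (selP y j (A d j)) := by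
          simp [S, evalBool]
        rw [this]
        refine Finset.sum_congr rfl fun d _ => ?_
        simp only [selP_eval y a hv]
        rw [Finset.prod_ite_zero]
        simp only [Finset.prod_const_one, y, Finset.mem_univ, true_imp_iff, Prod.forall]
        by_cases h1 : a (E (Sum.inl d)) = true <;> simp [h1]
      rw [hb, hS]
      by_cases hf : ∃ d, a (E (Sum.inl d)) = true ∧
          ∀ p : Fin t × Fin s, (a (E (Sum.inr p)) = true ↔ A d p.1 = some p.2)
      · have ht : addrF E A a = true := by simpa [addrF] using hf
        obtain ⟨d, hd⟩ := hf
        rw [ht, Finset.sum_eq_single d]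
        · rw [if_pos hd]; simp
        · intro d' _ hne
          rw [if_neg]
          intro hd'
          apply hne
          apply hA
          funext j
          apply Option.ext
          intro i
          exact (hd'.2 (j, i)).symm.trans (hd.2 (j, i))
        · simp
      · have ht : addrF E A a = false := by simpa [addrF] using hf
        rw [ht, Finset.sum_eq_zero]
        · simp
        · intro d _
          rw [if_neg]
          exact fun h => hf ⟨d, h⟩
    · have hb : ORf (t * (s * s)) b = true := by
        push Not at hv
        obtain ⟨j, i, i', h1, h2, h3⟩ := hv
        simp only [ORf, decide_eq_true_eq]
        refine ⟨φ.symm (j, i, i'), ?_⟩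
        simp [b, h1, h2, h3]
      have hf : addrF E A a = false := by
        simp only [addrF, decide_eq_false_iff_not]
        rintro ⟨d, _, hd⟩
        apply hv
        intro j i i' h1 h2
        have h1' := (hd (j, i)).1 h1
        have h2' := (hd (j, i')).1 h2
        exact Option.some.inj (h1'.symm.trans h2')
      rw [hb, hf]
      simp

lemma pdeg_bound (n t s : ℕ) (h1 : t * s < n) (h2 : n ≤ (s + 1) ^ t) :
    ∃ f : (Fin n → Bool) → Bool, TrulyVariate f ∧
      pdeg (1/3) f ≤ 2 * pdeg (1/3) (ORf (t * (s * s))) + (1 + t) := by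
  obtain ⟨m, rfl⟩ : ∃ m, n = (m + 1) + t * s := ⟨n - t * s - 1, by omega⟩
  have hE : Fintype.card (Fin (m + 1) ⊕ Fin t × Fin s) = Fintype.card (Fin ((m + 1) + t * s)) := by
    simp
  let E := Fintype.equivOfCardEq hE
  have hA : Fintype.card (Fin (m + 1)) ≤ Fintype.card (Fin t → Option (Fin s)) := by
    simp; omega
  obtain ⟨A0⟩ := Function.Embedding.nonempty_of_card_le hA
  let A : Fin (m + 1) → Fin t → Option (Fin s) :=
    fun d => Equiv.swap (A0 0) (fun _ => none) (A0 d)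
  have hAi : Function.Injective A := (Equiv.injective _).comp A0.injective
  refine ⟨addrF E A, addrF_truly E A 0 ?_, Nat.sInf_le (addrF_has E A hAi)⟩
  intro j
  simp [A]


open Filter Asymptotics in
lemma ev_exp (c β : ℝ) (hβ : 0 < β) :
    ∀ᶠ x : ℝ in atTop, x ^ (β * c) + 1 ≤ (2:ℝ) ^ (x ^ β) := by
  have h1 : ∀ᶠ z : ℝ in atTop, z ^ c + 1 ≤ (2:ℝ) ^ z := by
    have h := (isLittleO_rpow_exp_pos_mul_atTop c (Real.log_pos one_lt_two)).bound
      (show (0:ℝ) < 1/2 by norm_num)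
    filter_upwards [h, eventually_ge_atTop 1] with z hz hz1
    rw [Real.norm_of_nonneg (by positivity), Real.norm_of_nonneg (by positivity)] at hz
    rw [← Real.rpow_def_of_pos two_pos] at hz
    have : (2:ℝ) ^ (1:ℝ) ≤ 2 ^ z := Real.rpow_le_rpow_of_exponent_le one_le_two hz1
    rw [Real.rpow_one] at this
    linarith
  filter_upwards [(tendsto_rpow_atTop hβ).eventually h1, eventually_ge_atTop 0] with x hx hx0
  rwa [Real.rpow_mul hx0]

open Filter Asymptotics in
lemma rpow_lo {a b : ℝ} (h : a < b) :
    (fun x : ℝ => x ^ a) =o[atTop] (fun x : ℝ => x ^ b) := by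
  refine (isLittleO_iff_tendsto' ?_).2 ?_
  · filter_upwards [eventually_gt_atTop 0] with x hx h0
    exact absurd h0 (by positivity)
  · refine (tendsto_rpow_neg_atTop (sub_pos.2 h)).congr' ?_
    filter_upwards [eventually_gt_atTop 0] with x hx
    rw [← Real.rpow_sub hx]; congr 1; ring

open Filter Asymptotics in
lemma ev_small (β : ℝ) (h1 : β < 1) :
    ∀ᶠ x : ℝ in atTop, 2 * x ^ β + 3 ≤ x := by
  have h := (rpow_lo h1).bound (show (0:ℝ) < 1/4 by norm_num)
  filter_upwards [h, eventually_ge_atTop 6] with x hx hx1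
  rw [Real.norm_of_nonneg (by positivity), Real.norm_of_nonneg (by positivity), Real.rpow_one] at hx
  linarith

open Filter Asymptotics in
lemma ev_final (c ε β : ℝ) (hc : 0 < c) (hε : 0 < ε) (hβ : 0 < β) (h1 : β < 1) :
    ∀ᶠ x : ℝ in atTop, 2 * (6 * x ^ β) ^ (c + ε) + (x ^ (β * c) + 2) ≤ x ^ (β * c + ε) := by
  have hlt : β * (c + ε) < β * c + ε := by nlinarith
  have hpos : 0 < β * c + ε := by positivity
  have g1 := (rpow_lo hlt).const_mul_left (2 * 6 ^ (c + ε))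
  have g2 := rpow_lo (show β * c < β * c + ε by linarith)
  have g3 := (rpow_lo hpos).const_mul_left 2
  have h := (g1.add (g2.add g3)).bound one_pos
  filter_upwards [h, eventually_ge_atTop 1] with x hx hx1
  have hx0 : (0:ℝ) ≤ x := by linarith
  rw [one_mul, Real.norm_of_nonneg (by positivity), Real.norm_of_nonneg (by positivity),
    Real.rpow_zero, mul_one] at hx
  rw [Real.mul_rpow (by norm_num) (by positivity), ← Real.rpow_mul hx0]
  linarith

open Filter in
theorem upper_bound_truly_nvariate (c : ℝ) (hc : 0 < c)
    (hOR : ∀ ε : ℝ, 0 < ε → ∃ N : ℕ, ∀ n : ℕ, N ≤ n →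
      (pdeg (1/3) (ORf n) : ℝ) ≤ (Real.logb 2 n) ^ (c + ε)) :
    ∀ ε : ℝ, 0 < ε → ∃ N' : ℕ, ∀ n : ℕ, N' ≤ n →
      ∃ f : (Fin n → Bool) → Bool, TrulyVariate f ∧
        (pdeg (1/3) f : ℝ) ≤ (Real.logb 2 n) ^ (c / (c + 1) + ε) := by
  intro ε hε
  obtain ⟨N, hN⟩ := hOR ε hε
  obtain ⟨β, hβdef⟩ : ∃ β, β = 1 / (c + 1) := ⟨_, rfl⟩
  have hβ : 0 < β := by rw [hβdef]; positivity
  have hβ1 : β < 1 := by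
    rw [hβdef, div_lt_one (by linarith)]; linarith
  have hα : c / (c + 1) = β * c := by rw [hβdef]; ring
  have hsum : β + β * c = 1 := by rw [hβdef]; field_simp; ring
  have hlog : Tendsto (fun n : ℕ => Real.logb 2 (n : ℝ)) atTop atTop :=
    (Real.tendsto_logb_atTop one_lt_two).comp tendsto_natCast_atTop_atTop
  have hev : ∀ᶠ x : ℝ in atTop, (x ^ (β * c) + 1 ≤ (2:ℝ) ^ (x ^ β)) ∧ (2 * x ^ β + 3 ≤ x) ∧
      (2 * (6 * x ^ β) ^ (c + ε) + (x ^ (β * c) + 2) ≤ x ^ (β * c + ε)) ∧ 1 ≤ x ∧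
      (N : ℝ) ≤ x ^ β :=
    (ev_exp c β hβ).and ((ev_small β hβ1).and ((ev_final c ε β hc hε hβ hβ1).and
      ((eventually_ge_atTop 1).and ((tendsto_rpow_atTop hβ).eventually (eventually_ge_atTop _)))))
  obtain ⟨N', hN'⟩ := eventually_atTop.1 ((hlog.eventually hev).and (eventually_gt_atTop 0))
  refine ⟨N', fun n hn => ?_⟩
  obtain ⟨⟨e1, e2, e3, e4, e5⟩, hn0⟩ := hN' n hn
  rw [hα]
  have hn0' : (0:ℝ) < n := by exact_mod_cast hn0
  have hL : (2:ℝ) ^ (Real.logb 2 n) = n := Real.rpow_logb two_pos (by norm_num) hn0'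
  generalize Real.logb 2 (n:ℝ) = L at *
  have hL0 : 0 < L := by linarith
  obtain ⟨u, hu⟩ : ∃ u, u = ⌈L ^ β⌉₊ := ⟨_, rfl⟩
  obtain ⟨t, ht⟩ : ∃ t, t = ⌈L ^ (β * c)⌉₊ := ⟨_, rfl⟩
  have hu1 : L ^ β ≤ u := hu ▸ Nat.le_ceil _
  have hu2 : (u : ℝ) ≤ L ^ β + 1 := hu ▸ (Nat.ceil_lt_add_one (by positivity)).le
  have ht1 : L ^ (β * c) ≤ t := ht ▸ Nat.le_ceil _
  have ht2 : (t : ℝ) ≤ L ^ (β * c) + 1 := ht ▸ (Nat.ceil_lt_add_one (by positivity)).le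
  have ht0 : 1 ≤ t := by
    have : (0:ℝ) < t := lt_of_lt_of_le (by positivity) ht1
    exact_mod_cast this
  have hb1 : 1 ≤ L ^ β := Real.one_le_rpow e4 hβ.le
  have hts : t ≤ 2 ^ u := by
    have : (t:ℝ) ≤ (2:ℝ) ^ (u:ℝ) := ht2.trans (e1.trans
      (Real.rpow_le_rpow_of_exponent_le one_le_two hu1))
    rw [Real.rpow_natCast] at this
    exact_mod_cast this
  have hlt : t * 2 ^ u < n := by
    have h2 : (2:ℝ) ^ ((2 * u : ℕ) : ℝ) < (2:ℝ) ^ L :=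
      Real.rpow_lt_rpow_of_exponent_lt one_lt_two (by push_cast; linarith)
    rw [hL, Real.rpow_natCast] at h2
    have h3 : 2 ^ (2 * u) < n := by exact_mod_cast h2
    refine lt_of_le_of_lt ?_ h3
    calc t * 2 ^ u ≤ 2 ^ u * 2 ^ u := Nat.mul_le_mul_right _ hts
      _ = 2 ^ (2 * u) := by ring
  have hge : n ≤ (2 ^ u + 1) ^ t := by
    have h1 : L ≤ ((u * t : ℕ) : ℝ) := by
      push_cast
      calc L = L ^ β * L ^ (β * c) := by rw [← Real.rpow_add hL0, hsum, Real.rpow_one]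
        _ ≤ u * t := mul_le_mul hu1 ht1 (by positivity) (by positivity)
    have h2 : (2:ℝ) ^ L ≤ (2:ℝ) ^ ((u * t : ℕ) : ℝ) :=
      Real.rpow_le_rpow_of_exponent_le one_le_two h1
    rw [hL, Real.rpow_natCast] at h2
    have h3 : n ≤ 2 ^ (u * t) := by exact_mod_cast h2
    refine h3.trans ?_
    rw [pow_mul]
    exact Nat.pow_le_pow_left (Nat.le_succ _) _
  obtain ⟨f, hf, hfd⟩ := pdeg_bound n t (2 ^ u) hlt hge
  refine ⟨f, hf, ?_⟩
  have hMN : N ≤ t * (2 ^ u * 2 ^ u) := by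
    have h1 : N ≤ u := by exact_mod_cast e5.trans hu1
    have h2 : u ≤ 2 ^ u := Nat.lt_two_pow_self.le
    have h3 : 1 ≤ 2 ^ u := Nat.one_le_two_pow
    calc N ≤ 2 ^ u := h1.trans h2
      _ = 1 * (1 * 2 ^ u) := by ring
      _ ≤ t * (2 ^ u * 2 ^ u) := Nat.mul_le_mul ht0 (Nat.mul_le_mul_right _ h3)
  have hM := hN _ hMN
  have hMpos : 1 ≤ t * (2 ^ u * 2 ^ u) :=
    Nat.mul_pos ht0 (by positivity)
  have hlogM : Real.logb 2 ((t * (2 ^ u * 2 ^ u) : ℕ) : ℝ) ≤ 6 * L ^ β := by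
    have h1 : t * (2 ^ u * 2 ^ u) ≤ 2 ^ (3 * u) := by
      calc t * (2 ^ u * 2 ^ u) ≤ 2 ^ u * (2 ^ u * 2 ^ u) := Nat.mul_le_mul_right _ hts
        _ = 2 ^ (3 * u) := by ring
    have h2 : Real.logb 2 ((t * (2 ^ u * 2 ^ u) : ℕ) : ℝ) ≤ Real.logb 2 ((2:ℝ) ^ (3 * u)) :=
      Real.logb_le_logb_of_le one_lt_two (by exact_mod_cast hMpos) (by exact_mod_cast h1)
    rw [Real.logb_pow, Real.logb_self_eq_one one_lt_two, mul_one] at h2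
    push_cast at h2 ⊢
    linarith
  have hlog0 : 0 ≤ Real.logb 2 ((t * (2 ^ u * 2 ^ u) : ℕ) : ℝ) :=
    Real.logb_nonneg one_lt_two (by exact_mod_cast hMpos)
  have hM2 := hM.trans (Real.rpow_le_rpow hlog0 hlogM (by positivity))
  have hfd' : (pdeg (1/3) f : ℝ) ≤ 2 * (pdeg (1/3) (ORf (t * (2 ^ u * 2 ^ u))) : ℝ) + (1 + t) := by
    exact_mod_cast hfd
  linarith
end
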